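/- arXiv:1803.05811 — 7 statements merged into one kernel-verified Lean document; each statement's English description precedes it below -/
import Mathlib

section
/- Let X and U be Polish spaces, let G be a Borel measurable subset of X × U, and let v : X × U → ℝ be Borel measurable. Define κ : X → ℝ ∪ {+∞} by κ(x) = inf{ v(x,u) : (x,u) ∈ G } (with the infimum over the empty set equal to +∞). Then κ is lower semi-analytic, i.e., { x : κ(x) < c } is analytic for every real c; in particular κ is universally measurable. -/
open MeasureTheory

/-!
The sublevel set `{κ < c}` is the projection to `X` of `G ∩ {v < c}`, hence analytic.

That an analytic set `A = f(ℕ^ℕ)` is universally measurable is Choquet's capacitability argument.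
For a finite measure `μ` and `c < μ A`, continuity from below along increasing sequences of
arbitrary sets lets one bound the coordinates of `ℕ^ℕ` one at a time by numbers `b 0, b 1, …`,
keeping the measure of the image above `c`. The box `∏ᵢ [0, b i]` is compact, and the closures of
the images of its finite-dimensional approximations decrease to its image, which therefore is a
compact subset of `A` of measure at least `c`. So `A` is, up to a null set, a countable union of
compact sets.
-/

open Set

section ProductTopology

variable {ι : Type*} {E : ι → Type*} [∀ i, TopologicalSpace (E i)]

lemma exists_finset_forall_eq_imp_mem_of_isCompact {C W : Set (∀ i, E i)}
    (hC : IsCompact C) (hW : IsOpen W) (hCW : C ⊆ W) :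
    ∃ I : Finset ι, ∀ τ ∈ C, ∀ σ : ∀ i, E i, (∀ i ∈ I, σ i = τ i) → σ ∈ W := by
  classical
  refine hC.induction_on (p := fun S ↦ ∃ I : Finset ι, ∀ τ ∈ S, ∀ σ : ∀ i, E i,
    (∀ i ∈ I, σ i = τ i) → σ ∈ W) ⟨∅, by simp⟩ ?mono ?union ?nhds
  case mono => exact fun S T hST ⟨I, hI⟩ ↦ ⟨I, fun τ hτ ↦ hI τ (hST hτ)⟩
  case union =>
    rintro S T ⟨I, hI⟩ ⟨J, hJ⟩
    refine ⟨I ∪ J, fun τ hτ σ hστ ↦ hτ.elim (fun hS ↦ hI τ hS σ fun i hi ↦ ?_)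
      fun hT ↦ hJ τ hT σ fun i hi ↦ ?_⟩
    · exact hστ i (Finset.mem_union_left J hi)
    · exact hστ i (Finset.mem_union_right I hi)
  case nhds =>
    intro τ hτ
    obtain ⟨I, u, hu, hIW⟩ := isOpen_pi_iff.1 hW τ (hCW hτ)
    have hnhds : (I : Set ι).pi u ∈ nhds τ :=
      set_pi_mem_nhds I.finite_toSet fun i hi ↦ (hu i hi).1.mem_nhds (hu i hi).2
    exact ⟨_, mem_nhdsWithin_of_mem_nhds hnhds, I, fun ρ hρ σ hσρ ↦
      hIW fun i hi ↦ hσρ i hi ▸ hρ i hi⟩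

lemma exists_finset_pi_subset_of_univ_pi_subset {K : ∀ i, Set (E i)} (hK : ∀ i, IsCompact (K i))
    {W : Set (∀ i, E i)} (hW : IsOpen W) (hKW : univ.pi K ⊆ W) :
    ∃ I : Finset ι, (I : Set ι).pi K ⊆ W := by
  classical
  rcases (univ.pi K).eq_empty_or_nonempty with hempty | ⟨τ, hτ⟩
  · obtain ⟨i, hi⟩ := univ_pi_eq_empty_iff.1 hempty
    exact ⟨{i}, by simp [hi]⟩
  obtain ⟨I, hI⟩ :=
    exists_finset_forall_eq_imp_mem_of_isCompact (isCompact_univ_pi hK) hW hKW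
  refine ⟨I, fun σ hσ ↦ hI (I.piecewise σ τ) (fun i _ ↦ ?_) σ fun i hi ↦ by simp [hi]⟩
  by_cases hi : i ∈ I
  · simpa [hi] using hσ i hi
  · simpa [hi] using hτ i (mem_univ i)

lemma iInter_closure_image_pi_eq_image_univ_pi {Y : Type*} [TopologicalSpace Y] [T2Space Y]
    {f : (∀ i, E i) → Y} (hf : Continuous f) {K : ∀ i, Set (E i)} (hK : ∀ i, IsCompact (K i)) :
    ⋂ I : Finset ι, closure (f '' (I : Set ι).pi K) = f '' univ.pi K := by
  refine Subset.antisymm (fun y hy ↦ ?_) <| subset_iInter fun I ↦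
    (image_mono (pi_mono' (fun _ _ ↦ Subset.rfl) (subset_univ _))).trans subset_closure
  by_contra hyK
  obtain ⟨V, N, hV, hN, hKV, hyN, hVN⟩ :=
    ((isCompact_univ_pi hK).image hf).separation_of_notMem hyK
  obtain ⟨I, hI⟩ := exists_finset_pi_subset_of_univ_pi_subset hK (hV.preimage hf)
    (image_subset_iff.1 hKV)
  have hyV : y ∈ closure V := closure_mono (image_subset_iff.2 hI) (mem_iInter.1 hy I)
  exact (hVN.closure_left hN).notMem_of_mem_left hyV hyN

end ProductTopology

section Capacitability

variable {X : Type*} [MeasurableSpace X]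

lemma exists_lt_measure_image_inter_setOf_le {α : Type*} {μ : Measure X} {f : α → X} {c : ENNReal}
    (g : α → ℕ) {P : Set α} (hP : c < μ (f '' P)) :
    ∃ k : ℕ, c < μ (f '' (P ∩ {a | g a ≤ k})) := by
  have hmono : Monotone fun k : ℕ ↦ f '' (P ∩ {a | g a ≤ k}) := fun k l hkl ↦
    image_mono (inter_subset_inter_right _ fun a (ha : g a ≤ k) ↦ ha.trans hkl)
  have hcover : ⋃ k : ℕ, {a | g a ≤ k} = univ := iUnion_eq_univ_iff.2 fun a ↦ ⟨g a, le_refl (g a)⟩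
  rwa [← lt_iSup_iff, ← hmono.measure_iUnion, ← image_iUnion, ← inter_iUnion, hcover, inter_univ]

lemma exists_forall_lt_measure_image_setOf_forall_le {α : Type*} {μ : Measure X} {f : α → X}
    {c : ENNReal} (g : ℕ → α → ℕ) (hc : c < μ (range f)) :
    ∃ b : ℕ → ℕ, ∀ n, c < μ (f '' {a | ∀ i < n, g i a ≤ b i}) := by
  choose! k hk using fun (n : ℕ) (P : Set α) (hP : c < μ (f '' P)) ↦
    exists_lt_measure_image_inter_setOf_le (g n) hP
  let P : ℕ → Set α := fun n ↦ Nat.rec univ (fun n Q ↦ Q ∩ {a | g n a ≤ k n Q}) n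
  have hP : ∀ n, c < μ (f '' P n) := fun n ↦ by
    induction n with
    | zero => exact image_univ (f := f) ▸ hc
    | succ n ih => exact hk n (P n) ih
  have hP_eq : ∀ n, P n = {a | ∀ i < n, g i a ≤ k i (P i)} := fun n ↦ by
    induction n with
    | zero => simp [P]
    | succ n ih =>
      calc P (n + 1) = P n ∩ {a | g n a ≤ k n (P n)} := rfl
        _ = {a | (∀ i < n, g i a ≤ k i (P i)) ∧ g n a ≤ k n (P n)} := by
          nth_rw 1 [ih]; rfl
        _ = {a | ∀ i < n + 1, g i a ≤ k i (P i)} := by simp only [Nat.forall_lt_succ_right]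
  exact ⟨fun n ↦ k n (P n), fun n ↦ hP_eq n ▸ hP n⟩

lemma nullMeasurableSet_of_innerRegularWRT {μ : Measure X} {p q : Set X → Prop}
    (hμ : μ.InnerRegularWRT p q) (hp : ∀ K, p K → MeasurableSet K) {A : Set X} (hA : q A)
    (hA_fin : μ A ≠ ⊤) : NullMeasurableSet A μ := by
  by_cases hA_null : μ A = 0
  · exact NullMeasurableSet.of_null hA_null
  obtain ⟨r, -, hr, hr_lim⟩ := exists_seq_strictMono_tendsto' (pos_iff_ne_zero.2 hA_null)
  choose K hKA hpK hrK using fun n ↦ hμ hA (r n) (hr n).2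
  have hK_meas : MeasurableSet (⋃ n, K n) := .iUnion fun n ↦ hp _ (hpK n)
  have hK_ge : μ A ≤ μ (⋃ n, K n) :=
    le_of_tendsto' hr_lim fun n ↦ (hrK n).le.trans (measure_mono (subset_iUnion K n))
  exact hK_meas.nullMeasurableSet.congr <| ae_eq_of_subset_of_measure_ge (iUnion_subset hKA) hK_ge
    hK_meas.nullMeasurableSet hA_fin

variable [TopologicalSpace X] [T2Space X] [OpensMeasurableSpace X]

lemma le_measure_image_univ_pi_of_forall_finset {ι : Type*} [Countable ι] {E : ι → Type*}
    [∀ i, TopologicalSpace (E i)] {μ : Measure X} [IsFiniteMeasure μ] {f : (∀ i, E i) → X}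
    (hf : Continuous f) {K : ∀ i, Set (E i)} (hK : ∀ i, IsCompact (K i)) {c : ENNReal}
    (hc : ∀ I : Finset ι, c ≤ μ (f '' (I : Set ι).pi K)) : c ≤ μ (f '' univ.pi K) := by
  have hanti : Antitone fun I : Finset ι ↦ closure (f '' (I : Set ι).pi K) := fun I J hIJ ↦
    closure_mono (image_mono (pi_mono' (fun _ _ ↦ Subset.rfl) (Finset.coe_subset.2 hIJ)))
  rw [← iInter_closure_image_pi_eq_image_univ_pi hf hK, hanti.directed_ge.measure_iInter
    (fun I ↦ isClosed_closure.nullMeasurableSet) ⟨∅, measure_ne_top μ _⟩]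
  exact le_iInf fun I ↦ (hc I).trans (measure_mono subset_closure)

theorem innerRegularWRT_isCompact_analyticSet (μ : Measure X) [IsFiniteMeasure μ] :
    μ.InnerRegularWRT IsCompact AnalyticSet := by
  intro A hA r hr
  rw [AnalyticSet] at hA
  rcases hA with rfl | ⟨f, hf, rfl⟩
  · simp at hr
  obtain ⟨c, hrc, hc⟩ := exists_between hr
  obtain ⟨b, hb⟩ := exists_forall_lt_measure_image_setOf_forall_le (fun i (σ : ℕ → ℕ) ↦ σ i) hc
  have hbox : ∀ i, IsCompact (Iic (b i)) := fun i ↦ (finite_Iic (b i)).isCompact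
  refine ⟨f '' univ.pi fun i ↦ Iic (b i), image_subset_range _ _,
    (isCompact_univ_pi hbox).image hf,
    hrc.trans_le (le_measure_image_univ_pi_of_forall_finset hf hbox fun I ↦ ?_)⟩
  obtain ⟨n, hn⟩ := I.exists_nat_subset_range
  exact (hb n).le.trans <| measure_mono <| image_mono fun σ hσ i hi ↦
    hσ i (Finset.mem_range.1 (hn hi))

theorem nullMeasurableSet_of_analyticSet {A : Set X} (hA : AnalyticSet A) (μ : Measure X)
    [SFinite μ] : NullMeasurableSet A μ :=
  (nullMeasurableSet_of_innerRegularWRT (innerRegularWRT_isCompact_analyticSet μ.toFinite)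
    (fun _ hK ↦ hK.measurableSet) hA (measure_ne_top _ _)).mono_ac (absolutelyContinuous_toFinite μ)

end Capacitability

section LowerSemianalytic

/-- Lower semi-analytic extended-real-valued functions, the class preserved by partial
infimization. Only real levels are required, as in the usual definition. -/
def LowerSemianalytic {X : Type*} [TopologicalSpace X] (f : X → EReal) : Prop :=
  ∀ c : ℝ, AnalyticSet {x | f x < c}

lemma lowerSemianalytic_of_measurable {X : Type*} [TopologicalSpace X] [PolishSpace X]
    [MeasurableSpace X] [BorelSpace X] {f : X → EReal} (hf : Measurable f) :
    LowerSemianalytic f := fun _ ↦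
  (measurableSet_lt hf measurable_const).analyticSet

lemma analyticSet_inter {X : Type*} [TopologicalSpace X] [T2Space X] {s t : Set X}
    (hs : AnalyticSet s) (ht : AnalyticSet t) : AnalyticSet (s ∩ t) := by
  rw [inter_eq_iInter]
  exact .iInter fun b ↦ by cases b <;> assumption

lemma setOf_iInf_section_lt_eq_image_fst {X U R : Type*} [CompleteLinearOrder R]
    (G : Set (X × U)) (v : X × U → R) (c : R) :
    {x | (⨅ u ∈ {u | (x, u) ∈ G}, v (x, u)) < c} = Prod.fst '' (G ∩ {p | v p < c}) := by
  ext x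
  simp [iInf_lt_iff]

variable {X U : Type*} [TopologicalSpace X] [T2Space X] [TopologicalSpace U] [T2Space U]

lemma LowerSemianalytic.iInf_section {G : Set (X × U)} (hG : AnalyticSet G) {v : X × U → EReal}
    (hv : LowerSemianalytic v) :
    LowerSemianalytic fun x ↦ ⨅ u ∈ {u | (x, u) ∈ G}, v (x, u) := fun c ↦ by
  rw [setOf_iInf_section_lt_eq_image_fst]
  exact (analyticSet_inter hG (hv c)).image_of_continuous continuous_fst

theorem lower_semianalytic_of_inf_section_general [MeasurableSpace X] [OpensMeasurableSpace X]
    {G : Set (X × U)} (hG : AnalyticSet G) {v : X × U → EReal} (hv : LowerSemianalytic v)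
    {κ : X → EReal} (hκ : ∀ x, κ x = ⨅ u ∈ {u : U | (x, u) ∈ G}, v (x, u)) :
    LowerSemianalytic κ ∧
      ∀ c : ℝ, ∀ μ : Measure X, SFinite μ → NullMeasurableSet {x | κ x < c} μ := by
  have hκ_lsa : LowerSemianalytic κ := funext hκ ▸ hv.iInf_section hG
  exact ⟨hκ_lsa, fun c μ _ ↦ nullMeasurableSet_of_analyticSet (hκ_lsa c) μ⟩

end LowerSemianalytic

/-- Let `X`, `U` be Polish spaces, `G ⊆ X × U` Borel, and
`v : X × U → ℝ` Borel measurable.  Define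
`κ x = inf { v (x,u) : (x,u) ∈ G }` (in `EReal`, `inf ∅ = +∞`).  Then `κ` is
lower semi-analytic (every sublevel set `{x | κ x < c}`, `c ∈ ℝ`, is analytic);
in particular `κ` is universally measurable (each sublevel set is null
measurable for every finite Borel measure). -/
theorem lower_semianalytic_of_inf_section
    {X U : Type*}
    [TopologicalSpace X] [PolishSpace X] [MeasurableSpace X] [BorelSpace X]
    [TopologicalSpace U] [PolishSpace U] [MeasurableSpace U] [BorelSpace U]
    (G : Set (X × U)) (hG : MeasurableSet G)
    (v : X × U → ℝ) (hv : Measurable v)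
    (κ : X → EReal)
    (hκ : ∀ x, κ x = ⨅ u ∈ {u : U | (x, u) ∈ G}, (v (x, u) : EReal)) :
    (∀ c : ℝ, MeasureTheory.AnalyticSet {x : X | κ x < (c : EReal)}) ∧
      (∀ c : ℝ, ∀ μ : Measure X, IsFiniteMeasure μ →
        NullMeasurableSet {x : X | κ x < (c : EReal)} μ) :=
  (lower_semianalytic_of_inf_section_general hG.analyticSet
    (lowerSemianalytic_of_measurable hv.coe_real_ereal) hκ).imp_right
    fun h c μ _ ↦ h c μ inferInstance
end

section
/- Let X be a Polish space and U a compact metrizable space, and let c : X × U → ℝ be such that u ↦ c(x,u) is continuous for every x ∈ X and x ↦ c(x,u) is Borel measurable for every u ∈ U. Then there exists a Borel measurable function f : X → U such that c(x, f(x)) = min_{u ∈ U} c(x,u) for every x ∈ X; moreover x ↦ min_{u ∈ U} c(x,u) is Borel measurable. -/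
open MeasureTheory

/-!
The minimizers of `c (x, ·)` meet a nonempty closed set `C` exactly when `inf_C c (x, ·)` is at most
`inf_U c (x, ·)`, and both infima are measurable in `x` because they may be taken over countable
dense sets. A closed-valued map into `U` with this measurability property has a measurable
selection: by the Hausdorff–Alexandroff theorem `U` is a continuous image of the Cantor set, so it
can be pulled back to a map whose values are compact sets of reals, where the least element is a
measurable choice.
-/

open Set Topology TopologicalSpace

section Minimizers

variable {V α : Type*}

/-- The set of global minimizers of `φ`, the `argmin` of optimization; it may be empty. -/
def minimizers [LE α] (φ : V → α) : Set V := {v | ∀ w, φ v ≤ φ w}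

theorem iInf_eq_of_mem_minimizers [ConditionallyCompleteLattice α] {φ : V → α} {v : V}
    (hv : v ∈ minimizers φ) : ⨅ w, φ w = φ v :=
  IsLeast.csInf_eq ⟨mem_range_self v, forall_mem_range.2 hv⟩

variable [TopologicalSpace V] [TopologicalSpace α] {φ : V → α}

theorem isClosed_minimizers [Preorder α] [ClosedIicTopology α] (hφ : Continuous φ) :
    IsClosed (minimizers φ) := by
  rw [minimizers, ofPred_forall]
  exact isClosed_iInter fun w => isClosed_Iic.preimage hφ

theorem minimizers_nonempty [CompactSpace V] [Nonempty V] [LinearOrder α] [ClosedIicTopology α]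
    (hφ : Continuous φ) : (minimizers φ).Nonempty := by
  obtain ⟨v, -, hv⟩ := isCompact_univ.exists_isMinOn univ_nonempty hφ.continuousOn
  exact ⟨v, isMinOn_univ_iff.1 hv⟩

theorem minimizers_inter_nonempty_iff [ConditionallyCompleteLinearOrder α] [ClosedIicTopology α]
    {C : Set V} (hC : IsCompact C) (hne : C.Nonempty) (hφ : ContinuousOn φ C)
    (hbdd : BddBelow (range φ)) :
    (minimizers φ ∩ C).Nonempty ↔ ⨅ v : C, φ v ≤ ⨅ v, φ v := by
  constructor
  · rintro ⟨v, hv, hvC⟩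
    rw [iInf_eq_of_mem_minimizers hv]
    exact ciInf_le (hbdd.mono (range_comp_subset_range Subtype.val φ)) (⟨v, hvC⟩ : C)
  · intro hle
    obtain ⟨v, hvC, hv⟩ := hC.exists_isMinOn hne hφ
    refine ⟨v, fun w => ?_, hvC⟩
    calc φ v = ⨅ v : C, φ v := (hv.iInf_eq hvC).symm
      _ ≤ ⨅ v, φ v := hle
      _ ≤ φ w := ciInf_le hbdd w

end Minimizers

theorem exists_isClosedEmbedding_cantorSpace_real :
    ∃ e : (ℕ → Bool) → ℝ, IsClosedEmbedding e :=
  ⟨_, isClosed_cantorSet.isClosedEmbedding_subtypeVal.comp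
    cantorSetHomeomorphNatToBool.symm.isClosedEmbedding⟩

/-- Measurability of a set-valued map, the hypothesis of the measurable selection theorem: for every
closed `C`, the points whose value meets `C` form a measurable set. Testing with closed rather than
open sets is the stronger of the two usual conventions when `V` is metrizable. -/
def MeasurableMultifunction {X V : Type*} [MeasurableSpace X] [TopologicalSpace V]
    (F : X → Set V) : Prop :=
  ∀ C, IsClosed C → MeasurableSet {x | (F x ∩ C).Nonempty}

namespace MeasurableMultifunction

variable {X V W α : Type*} [MeasurableSpace X] [TopologicalSpace V] [TopologicalSpace W]

theorem image {F : X → Set V} (hF : MeasurableMultifunction F) {e : V → W} (he : Continuous e) :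
    MeasurableMultifunction fun x => e '' F x := fun C hC => by
  simpa only [image_inter_nonempty_iff] using hF (e ⁻¹' C) (hC.preimage he)

theorem preimage {F : X → Set W} (hF : MeasurableMultifunction F) {q : V → W}
    (hq : IsClosedMap q) :
    MeasurableMultifunction fun x => q ⁻¹' F x := fun C hC => by
  simpa only [inter_comm _ C, inter_comm _ (q '' C), image_inter_nonempty_iff] using
    hF (q '' C) (hq C hC)

variable [ConditionallyCompleteLinearOrder α] [TopologicalSpace α] [OrderTopology α]
  [SecondCountableTopology α] [MeasurableSpace α] [BorelSpace α]

theorem measurable_sInf {F : X → Set α} (hF : MeasurableMultifunction F)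
    (hcompact : ∀ x, IsCompact (F x)) (hne : ∀ x, (F x).Nonempty) :
    Measurable fun x => sInf (F x) := by
  refine measurable_of_Iic fun t => ?_
  have sInf_le_iff (x : X) : sInf (F x) ≤ t ↔ (F x ∩ Iic t).Nonempty :=
    ⟨fun h => ⟨_, (hcompact x).sInf_mem (hne x), h⟩,
      fun ⟨_, ha, hat⟩ => (((hcompact x).isLeast_sInf (hne x)).2 ha).trans hat⟩
  simpa only [Set.preimage, mem_Iic, sInf_le_iff] using hF (Iic t) isClosed_Iic

theorem exists_measurable_selection_of_isClosedEmbedding [MeasurableSpace V] [BorelSpace V]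
    {F : X → Set V} (hF : MeasurableMultifunction F) (hcompact : ∀ x, IsCompact (F x))
    (hne : ∀ x, (F x).Nonempty) {e : V → α} (he : IsClosedEmbedding e) :
    ∃ f : X → V, Measurable f ∧ ∀ x, f x ∈ F x := by
  have hcompact_image (x : X) : IsCompact (e '' F x) := (hcompact x).image he.continuous
  have hne_image (x : X) : (e '' F x).Nonempty := (hne x).image e
  choose f hf hf_eq using fun x => (hcompact_image x).sInf_mem (hne_image x)
  refine ⟨f, he.measurableEmbedding.measurable_comp_iff.1 ?_, hf⟩
  simpa only [Function.comp_def, hf_eq] using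
    (hF.image he.continuous).measurable_sInf hcompact_image hne_image

theorem exists_measurable_selection [CompactSpace V] [MetrizableSpace V] [Nonempty V]
    [MeasurableSpace V] [BorelSpace V] {F : X → Set V} (hF : MeasurableMultifunction F)
    (hclosed : ∀ x, IsClosed (F x)) (hne : ∀ x, (F x).Nonempty) :
    ∃ f : X → V, Measurable f ∧ ∀ x, f x ∈ F x := by
  let := metrizableSpaceMetric V
  obtain ⟨q, hq, hq_surj⟩ := exists_nat_bool_continuous_surjective_of_compact V
  obtain ⟨e, he⟩ := exists_isClosedEmbedding_cantorSpace_real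
  obtain ⟨f, hf, hf_mem⟩ :=
    (hF.preimage hq.isClosedMap).exists_measurable_selection_of_isClosedEmbedding
      (fun x => ((hclosed x).preimage hq).isCompact) (fun x => (hne x).preimage hq_surj) he
  exact ⟨q ∘ f, hq.measurable.comp hf, hf_mem⟩

end MeasurableMultifunction

section MeasurableInfimum

variable {X V α : Type*} [MeasurableSpace X] [TopologicalSpace V]
  [ConditionallyCompleteLinearOrder α] [TopologicalSpace α] [OrderTopology α]
  [SecondCountableTopology α] [MeasurableSpace α] [BorelSpace α] {g : X → V → α}

theorem measurable_iInf_of_continuous [SeparableSpace V] (hcont : ∀ x, Continuous (g x))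
    (hmeas : ∀ v, Measurable fun x => g x v) : Measurable fun x => ⨅ v, g x v := by
  obtain ⟨S, hS_countable, hS_dense⟩ := exists_countable_dense V
  have := hS_countable.to_subtype
  simp_rw [← fun x => hS_dense.ciInf' (hcont x)]
  exact Measurable.iInf fun v : S => hmeas v

theorem measurableMultifunction_minimizers [CompactSpace V] [SecondCountableTopology V]
    (hcont : ∀ x, Continuous (g x)) (hmeas : ∀ v, Measurable fun x => g x v) :
    MeasurableMultifunction fun x => minimizers (g x) := by
  intro C hC
  rcases C.eq_empty_or_nonempty with rfl | hne
  · simp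
  have hbdd (x : X) : BddBelow (range (g x)) :=
    have : Nonempty α := ⟨g x hne.some⟩
    (isCompact_range (hcont x)).bddBelow
  simp_rw [fun x =>
    minimizers_inter_nonempty_iff hC.isCompact hne (hcont x).continuousOn (hbdd x)]
  exact measurableSet_le
    (measurable_iInf_of_continuous (fun x => (hcont x).comp continuous_subtype_val)
      fun v : C => hmeas v)
    (measurable_iInf_of_continuous hcont hmeas)

end MeasurableInfimum

theorem exists_measurable_argmin_general {X U α : Type*} [MeasurableSpace X]
    [TopologicalSpace U] [CompactSpace U] [MetrizableSpace U] [Nonempty U]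
    [MeasurableSpace U] [BorelSpace U]
    [ConditionallyCompleteLinearOrder α] [TopologicalSpace α] [OrderTopology α]
    [SecondCountableTopology α] [MeasurableSpace α] [BorelSpace α]
    (c : X × U → α)
    (hc_cont : ∀ x : X, Continuous fun u : U => c (x, u))
    (hc_meas : ∀ u : U, Measurable fun x : X => c (x, u)) :
    ∃ f : X → U, Measurable f ∧
      (∀ x : X, ∀ u : U, c (x, f x) ≤ c (x, u)) ∧
      (∀ x : X, c (x, f x) = ⨅ u : U, c (x, u)) ∧
      Measurable fun x : X => ⨅ u : U, c (x, u) := by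
  let := metrizableSpaceMetric U
  obtain ⟨f, hf, hf_min⟩ :=
    (measurableMultifunction_minimizers hc_cont hc_meas).exists_measurable_selection
      (fun x => isClosed_minimizers (hc_cont x)) (fun x => minimizers_nonempty (hc_cont x))
  exact ⟨f, hf, hf_min, fun x => (iInf_eq_of_mem_minimizers (hf_min x)).symm,
    measurable_iInf_of_continuous hc_cont hc_meas⟩

/-- Let `X` be Polish and `U` compact metrizable (nonempty),
and `c : X × U → ℝ` continuous in `u` for each `x` and Borel measurable in `x`
for each `u`.  Then there is a Borel measurable `f : X → U` with
`c (x, f x) = min_{u} c (x, u)` for every `x`; moreover `x ↦ min_u c (x,u)` is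
Borel measurable. -/
theorem exists_measurable_argmin
    {X U : Type*}
    [TopologicalSpace X] [PolishSpace X] [MeasurableSpace X] [BorelSpace X]
    [TopologicalSpace U] [CompactSpace U] [TopologicalSpace.MetrizableSpace U] [Nonempty U]
    [MeasurableSpace U] [BorelSpace U]
    (c : X × U → ℝ)
    (hc_cont : ∀ x : X, Continuous fun u : U => c (x, u))
    (hc_meas : ∀ u : U, Measurable fun x : X => c (x, u)) :
    ∃ f : X → U, Measurable f ∧
      (∀ x : X, ∀ u : U, c (x, f x) ≤ c (x, u)) ∧
      (∀ x : X, c (x, f x) = ⨅ u : U, c (x, u)) ∧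
      Measurable fun x : X => ⨅ u : U, c (x, u) :=
  exists_measurable_argmin_general c hc_cont hc_meas
end

section
/- Let k > 0 and let X and W be independent random variables each uniformly distributed on {−1, 1}. For functions γ₀ : {−1,1} → ℝ and Borel measurable γ₁ : ℝ → ℝ define J(γ₀, γ₁) = E[ k·(γ₀(X) − X)² + (γ₁(γ₀(X) + W) − γ₀(X))² ]. Then inf over all such pairs (γ₀, γ₁) of J(γ₀, γ₁) equals 0, while J(γ₀, γ₁) > 0 for every pair (γ₀, γ₁). Consequently no optimal policy exists for this two-decision-maker team problem. -/
open MeasureTheory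

/-- The expected cost in the discrete (two-point) version of Witsenhausen's
counterexample: `X` and `W` are independent, uniform on `{-1, 1}`; the first
decision maker applies `u₀ = γ₀ X`, the second observes `γ₀ X + W` and applies
`u₁ = γ₁ (γ₀ X + W)`; the cost is `k (u₀ - X)² + (u₁ - u₀)²`.  The expectation
is the average over the four equally likely outcomes `(X, W) ∈ {-1,1}²`. -/
noncomputable def discreteWitCost (k : ℝ) (γ₀ γ₁ : ℝ → ℝ) : ℝ :=
  (1 / 4) *
    ((k * (γ₀ 1 - 1) ^ 2 + (γ₁ (γ₀ 1 + 1) - γ₀ 1) ^ 2) +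
     (k * (γ₀ 1 - 1) ^ 2 + (γ₁ (γ₀ 1 + (-1)) - γ₀ 1) ^ 2) +
     (k * (γ₀ (-1) - (-1)) ^ 2 + (γ₁ (γ₀ (-1) + 1) - γ₀ (-1)) ^ 2) +
     (k * (γ₀ (-1) - (-1)) ^ 2 + (γ₁ (γ₀ (-1) + (-1)) - γ₀ (-1)) ^ 2))

/-! The two effects of the first control compete. If the observations produced by `(X, W) = (1, -1)`
and `(-1, 1)` coincide, then `γ₀ 1 - γ₀ (-1) = 2`, so the second decision maker has to estimate two
values at distance `2` by one number and pays at least `1 / 2`. If they differ, the first decision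
maker has moved away from `X` and pays for it. An arbitrarily small move, sending `1` to `1 + ε`,
already separates the observations: the sign of the observation then reveals `X`, and the cost is
`k * ε ^ 2 / 2`, which takes every positive value. -/

theorem sub_sq_le {R : Type*} [CommRing R] [LinearOrder R] [IsStrictOrderedRing R] (a b : R) :
    (a - b) ^ 2 ≤ 2 * (a ^ 2 + b ^ 2) := by
  simpa only [sub_eq_add_neg, neg_sq] using add_sq_le (a := a) (b := -b)

namespace discreteWitCost

/-- The expectation of `(u₀ - X)²`, the term of the cost weighted by `k`. -/
noncomputable def controlCost (γ₀ : ℝ → ℝ) : ℝ :=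
  ((γ₀ 1 - 1) ^ 2 + (γ₀ (-1) + 1) ^ 2) / 2

/-- The expectation of `(u₁ - u₀)²`, the mean squared error with which the second decision maker
estimates the first control. -/
noncomputable def estimationCost (γ₀ γ₁ : ℝ → ℝ) : ℝ :=
  ((γ₁ (γ₀ 1 + 1) - γ₀ 1) ^ 2 + (γ₁ (γ₀ 1 - 1) - γ₀ 1) ^ 2 +
    (γ₁ (γ₀ (-1) + 1) - γ₀ (-1)) ^ 2 + (γ₁ (γ₀ (-1) - 1) - γ₀ (-1)) ^ 2) / 4

/-- The map sending positive reals to `1 + ε` and all others to `-1`. It serves both decision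
makers: as `γ₀` it shifts `X = 1` by `ε` and fixes `X = -1`, and as `γ₁` it decodes the shifted
control from the sign of the observation. -/
noncomputable def signaling (ε x : ℝ) : ℝ :=
  if 0 < x then 1 + ε else -1

variable {γ₀ : ℝ → ℝ} {ε x : ℝ}

theorem eq_controlCost_add_estimationCost (k : ℝ) (γ₀ γ₁ : ℝ → ℝ) :
    discreteWitCost k γ₀ γ₁ = k * controlCost γ₀ + estimationCost γ₀ γ₁ := by
  simp only [discreteWitCost, controlCost, estimationCost, ← sub_eq_add_neg]
  ring

theorem controlCost_nonneg (γ₀ : ℝ → ℝ) : 0 ≤ controlCost γ₀ := by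
  unfold controlCost
  positivity

theorem estimationCost_nonneg (γ₀ γ₁ : ℝ → ℝ) : 0 ≤ estimationCost γ₀ γ₁ := by
  unfold estimationCost
  positivity

theorem controlCost_pos_of_observation_ne (hne : γ₀ 1 - 1 ≠ γ₀ (-1) + 1) :
    0 < controlCost γ₀ := by
  have sq_diff_pos : 0 < ((γ₀ 1 - 1) - (γ₀ (-1) + 1)) ^ 2 := sq_pos_of_ne_zero (sub_ne_zero.mpr hne)
  have sq_diff_le := sub_sq_le (γ₀ 1 - 1) (γ₀ (-1) + 1)
  unfold controlCost
  linarith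

theorem half_le_estimationCost_of_observation_eq (γ₁ : ℝ → ℝ) (heq : γ₀ 1 - 1 = γ₀ (-1) + 1) :
    1 / 2 ≤ estimationCost γ₀ γ₁ := by
  have control_gap : γ₀ 1 - γ₀ (-1) = 2 := by linarith
  have errors_large :
      2 ≤ (γ₁ (γ₀ 1 - 1) - γ₀ 1) ^ 2 + (γ₁ (γ₀ (-1) + 1) - γ₀ (-1)) ^ 2 := by
    rw [← heq]
    have gap_sq_le := sub_sq_le
      (γ₁ (γ₀ 1 - 1) - γ₀ 1) (γ₁ (γ₀ 1 - 1) - γ₀ (-1))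
    rw [sub_sub_sub_cancel_left, ← neg_sub, control_gap] at gap_sq_le
    linarith
  unfold estimationCost
  linarith [sq_nonneg (γ₁ (γ₀ 1 + 1) - γ₀ 1), sq_nonneg (γ₁ (γ₀ (-1) - 1) - γ₀ (-1))]

theorem pos {k : ℝ} (hk : 0 < k) (γ₀ γ₁ : ℝ → ℝ) : 0 < discreteWitCost k γ₀ γ₁ := by
  rw [eq_controlCost_add_estimationCost]
  by_cases heq : γ₀ 1 - 1 = γ₀ (-1) + 1
  · have estimation_pos : 0 < estimationCost γ₀ γ₁ :=
      one_half_pos.trans_le (half_le_estimationCost_of_observation_eq γ₁ heq)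
    exact add_pos_of_nonneg_of_pos (mul_nonneg hk.le (controlCost_nonneg γ₀)) estimation_pos
  · exact add_pos_of_pos_of_nonneg (mul_pos hk (controlCost_pos_of_observation_ne heq))
      (estimationCost_nonneg γ₀ γ₁)

theorem signaling_of_pos (hx : 0 < x) : signaling ε x = 1 + ε :=
  if_pos hx

theorem signaling_of_nonpos (hx : x ≤ 0) : signaling ε x = -1 :=
  if_neg hx.not_gt

theorem measurable_signaling (ε : ℝ) : Measurable (signaling ε) :=
  Measurable.ite measurableSet_Ioi measurable_const measurable_const

theorem controlCost_signaling (ε : ℝ) : controlCost (signaling ε) = ε ^ 2 / 2 := by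
  rw [controlCost, signaling_of_pos one_pos, signaling_of_nonpos (by norm_num)]
  ring

theorem estimationCost_signaling (hε : 0 < ε) :
    estimationCost (signaling ε) (signaling ε) = 0 := by
  have control_one : signaling ε 1 = 1 + ε := signaling_of_pos one_pos
  have control_neg_one : signaling ε (-1) = -1 := signaling_of_nonpos (by norm_num)
  rw [estimationCost, control_one, control_neg_one,
    signaling_of_pos (x := 1 + ε + 1) (by linarith),
    signaling_of_pos (x := 1 + ε - 1) (by linarith),
    signaling_of_nonpos (x := -1 + 1) (by norm_num),
    signaling_of_nonpos (x := -1 - 1) (by norm_num)]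
  ring

theorem signaling_eq (k : ℝ) (hε : 0 < ε) :
    discreteWitCost k (signaling ε) (signaling ε) = k * (ε ^ 2 / 2) := by
  rw [eq_controlCost_add_estimationCost, controlCost_signaling, estimationCost_signaling hε,
    add_zero]

theorem exists_signaling_eq {k r : ℝ} (hk : 0 < k) (hr : 0 < r) :
    ∃ ε, discreteWitCost k (signaling ε) (signaling ε) = r := by
  refine ⟨√(2 * r / k), ?_⟩
  rw [signaling_eq k (by positivity), Real.sq_sqrt (by positivity)]
  field_simp

theorem setOf_eq_Ioi {k : ℝ} (hk : 0 < k) :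
    {r : ℝ | ∃ γ₀ γ₁ : ℝ → ℝ, Measurable γ₁ ∧ r = discreteWitCost k γ₀ γ₁} = Set.Ioi 0 := by
  ext r
  constructor
  · rintro ⟨γ₀, γ₁, -, rfl⟩
    exact pos hk γ₀ γ₁
  · intro hr
    obtain ⟨ε, hε⟩ := exists_signaling_eq hk hr
    exact ⟨signaling ε, signaling ε, measurable_signaling ε, hε.symm⟩

end discreteWitCost

/-- For every `k > 0`, the infimum of the expected cost over
all pairs `(γ₀, γ₁)` (with `γ₁` Borel measurable) equals `0`, while every pair
has strictly positive cost: no optimal policy exists for this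
two-decision-maker team problem. -/
theorem discrete_witsenhausen_no_optimal (k : ℝ) (hk : 0 < k) :
    sInf {r : ℝ | ∃ γ₀ γ₁ : ℝ → ℝ, Measurable γ₁ ∧ r = discreteWitCost k γ₀ γ₁}
        = 0 ∧
      ∀ γ₀ γ₁ : ℝ → ℝ, Measurable γ₁ → 0 < discreteWitCost k γ₀ γ₁ := by
  rw [discreteWitCost.setOf_eq_Ioi hk]
  exact ⟨csInf_Ioi, fun γ₀ γ₁ _ => discreteWitCost.pos hk γ₀ γ₁⟩
end

section
/- Consider a static team with N decision makers and independent measurements in which each action space Uⁱ is a compact metrizable space and the cost c : Ω₀ × ∏ᵢYⁱ × ∏ᵢUⁱ → [0,∞) is continuous and bounded. Then an optimal team policy exists: there are Borel measurable maps γⁱ : Yⁱ → Uⁱ, i = 1,…,N, such that J(γ¹,…,γᴺ) = inf J over all tuples of Borel measurable policies. -/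
open MeasureTheory

/-!
Identify a policy `γ i` with the joint law of `(y i, γ i (y i))`, a probability measure on
`Y i × U i` with first marginal `Q i`. The set of all measures with that marginal is tight because
`U i` is compact, hence weakly compact. Integrating out `ω₀` leaves a bounded continuous cost, whose
expectation is weakly continuous in these laws because independence of the measurements makes the
joint law their product. So a minimizer exists among the relaxed policies. When all laws but
the `i`-th are fixed, the cost is the integral of a continuous function `g` on `Y i × U i` against
the `i`-th one, so replacing the latter by the law of a measurable selection of
`y ↦ argmin_u g (y, u)` does not increase the cost. Doing this for one `i` after the other turns the
minimizer into a deterministic one.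

The measurable selection comes from parametrizing `U i` by the Cantor set and choosing the least
parameter, which depends lower semicontinuously on `y`.
-/

open scoped BoundedContinuousFunction

section Selection

variable {Y K U : Type*} [TopologicalSpace Y]

theorem lowerSemicontinuous_of_isMinOn_section {α : Type*} [LinearOrder α]
    [TopologicalSpace K] [CompactSpace K] {B : Set (Y × K)} (hB : IsClosed B)
    {φ : K → α} (hφ : LowerSemicontinuous φ) {s : Y → K} (hs : ∀ y, (y, s y) ∈ B)
    (hmin : ∀ y, IsMinOn φ {k | (y, k) ∈ B} (s y)) :
    LowerSemicontinuous (φ ∘ s) := by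
  rw [lowerSemicontinuous_iff_isClosed_preimage] at hφ ⊢
  intro t
  have sublevel_eq : φ ∘ s ⁻¹' Set.Iic t = Prod.fst '' (B ∩ Prod.snd ⁻¹' (φ ⁻¹' Set.Iic t)) := by
    ext y
    constructor
    · exact fun hy => ⟨(y, s y), ⟨hs y, hy⟩, rfl⟩
    · rintro ⟨⟨y, k⟩, ⟨hk, hkt⟩, rfl⟩
      exact (hmin y hk).trans hkt
  rw [sublevel_eq]
  exact isClosedMap_fst_of_compactSpace _ (hB.inter ((hφ t).preimage continuous_snd))

variable [MeasurableSpace Y] [OpensMeasurableSpace Y] [TopologicalSpace U] [MeasurableSpace U]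
  [BorelSpace U]

theorem exists_measurable_selection_of_isClosedEmbedding_real [CompactSpace U] {φ : U → ℝ}
    (hφ : Topology.IsClosedEmbedding φ) {B : Set (Y × U)} (hB : IsClosed B)
    (hne : ∀ y, ∃ u, (y, u) ∈ B) :
    ∃ s : Y → U, Measurable s ∧ ∀ y, (y, s y) ∈ B := by
  have exists_min : ∀ y, ∃ u ∈ {u | (y, u) ∈ B}, IsMinOn φ {u | (y, u) ∈ B} u := fun y =>
    (hB.preimage (.prodMk_right y)).isCompact.exists_isMinOn (hne y) hφ.continuous.continuousOn
  choose s hs hmin using exists_min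
  have hφs : Measurable (φ ∘ s) :=
    (lowerSemicontinuous_of_isMinOn_section hB hφ.continuous.lowerSemicontinuous hs hmin).measurable
  exact ⟨s, hφ.measurableEmbedding.measurable_comp_iff.mp hφs, hs⟩

theorem exists_measurable_selection_of_isClosed [CompactSpace U]
    [TopologicalSpace.MetrizableSpace U] [Nonempty U] {B : Set (Y × U)} (hB : IsClosed B)
    (hne : ∀ y, ∃ u, (y, u) ∈ B) :
    ∃ s : Y → U, Measurable s ∧ ∀ y, (y, s y) ∈ B := by
  let _ := TopologicalSpace.metrizableSpaceMetric U
  obtain ⟨q, hq_cont, hq_surj⟩ := exists_nat_bool_continuous_surjective_of_compact U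
  let h : cantorSet → U := q ∘ cantorSetHomeomorphNatToBool
  have h_cont : Continuous h := hq_cont.comp cantorSetHomeomorphNatToBool.continuous
  have h_surj : Function.Surjective h := hq_surj.comp cantorSetHomeomorphNatToBool.surjective
  have : CompactSpace cantorSet := isCompact_iff_compactSpace.mp isCompact_cantorSet
  obtain ⟨s, hs, hsB⟩ := exists_measurable_selection_of_isClosedEmbedding_real
    isClosed_cantorSet.isClosedEmbedding_subtypeVal
    (hB.preimage (continuous_id.prodMap h_cont)) fun y => by
      obtain ⟨u, hu⟩ := hne y
      obtain ⟨k, rfl⟩ := h_surj u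
      exact ⟨k, hu⟩
  exact ⟨h ∘ s, h_cont.measurable.comp hs, hsB⟩

theorem exists_measurable_argmin_of_continuous [CompactSpace U]
    [TopologicalSpace.MetrizableSpace U] [Nonempty U] {g : Y × U → ℝ} (hg : Continuous g) :
    ∃ γ : Y → U, Measurable γ ∧ ∀ y u, g (y, γ y) ≤ g (y, u) := by
  have argmin_closed : IsClosed {p : Y × U | ∀ u, g p ≤ g (p.1, u)} := by
    rw [Set.ofPred_forall]
    exact isClosed_iInter fun u => isClosed_le hg (by fun_prop)
  refine exists_measurable_selection_of_isClosed argmin_closed fun y => ?_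
  obtain ⟨u, -, hu⟩ := isCompact_univ.exists_isMinOn Set.univ_nonempty
    (hg.comp (.prodMk_right y)).continuousOn
  exact ⟨u, fun v => hu (Set.mem_univ v)⟩

end Selection

section Integration

theorem exists_boundedContinuousFunction_eq_integral {Ω X : Type*} [MeasurableSpace Ω]
    {μ : Measure Ω} [TopologicalSpace X] [FirstCountableTopology X] {F : Ω → X → ℝ} {h : Ω → ℝ}
    (hF_meas : ∀ x, AEStronglyMeasurable (fun ω => F ω x) μ) (hF_cont : ∀ ω, Continuous (F ω))
    (hh : Integrable h μ) (hF_le : ∀ ω x, ‖F ω x‖ ≤ h ω) :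
    ∃ g : X →ᵇ ℝ, ∀ x, g x = ∫ ω, F ω x ∂μ :=
  ⟨.ofNormedAddCommGroup (fun x => ∫ ω, F ω x ∂μ)
    (continuous_of_dominated hF_meas (fun x => ae_of_all μ fun ω => hF_le ω x) hh
      (ae_of_all μ hF_cont))
    (∫ ω, h ω ∂μ)
    fun x => norm_integral_le_of_norm_le hh (ae_of_all μ fun ω => hF_le ω x), fun _ => rfl⟩

variable {ι : Type*} [Fintype ι] [DecidableEq ι] {Z : ι → Type*} [∀ i, MeasurableSpace (Z i)]

theorem map_update_pi_prod (P : ∀ i, ProbabilityMeasure (Z i)) (i : ι)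
    (ν : ProbabilityMeasure (Z i)) :
    ((Measure.pi fun j => (P j : Measure (Z j))).prod (ν : Measure (Z i))).map
        (fun p => Function.update p.1 i p.2) =
      Measure.pi fun j => (Function.update P i ν j : Measure (Z j)) := by
  refine (Measure.pi_eq fun s hs => ?_).symm
  have preimage_eq : (fun p : (∀ j, Z j) × Z i => Function.update p.1 i p.2) ⁻¹' Set.univ.pi s =
      Set.univ.pi (Function.update s i Set.univ) ×ˢ s i := by
    ext ⟨z, w⟩
    rw [Set.mem_preimage, Set.update_mem_pi_iff, Set.mem_prod]
    refine and_congr ⟨fun hz j _ => ?_, fun hz j hj => ?_⟩ (by simp)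
    · obtain rfl | hji := eq_or_ne j i
      · simp
      · simpa [hji] using hz j ⟨Set.mem_univ j, hji⟩
    · simpa [show j ≠ i from hj.2] using hz j (Set.mem_univ j)
  rw [Measure.map_apply measurable_update' (MeasurableSet.univ_pi hs), preimage_eq,
    Measure.prod_prod, Measure.pi_pi, ← Finset.prod_erase_mul _ _ (Finset.mem_univ i),
    ← Finset.prod_erase_mul Finset.univ (fun j => (Function.update P i ν j : Measure (Z j)) (s j))
      (Finset.mem_univ i)]
  simp only [Function.update_self, measure_univ, mul_one]
  congr 1
  refine Finset.prod_congr rfl fun j hj => ?_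
  simp only [Function.update_of_ne (Finset.ne_of_mem_erase hj)]

end Integration

/-- The joint law of the measurement `y ~ Q` and the action `γ y`. -/
noncomputable def policyLaw {Y U : Type*} [MeasurableSpace Y] [MeasurableSpace U]
    (Q : ProbabilityMeasure Y) {γ : Y → U} (hγ : Measurable γ) : ProbabilityMeasure (Y × U) :=
  Q.map (measurable_id.prodMk hγ).aemeasurable

/-- The randomized policies of a decision maker with measurement law `Q`, encoded as joint laws of
measurement and action. -/
def relaxedPolicies {Y : Type*} (U : Type*) [MeasurableSpace Y] [MeasurableSpace U]
    (Q : ProbabilityMeasure Y) : Set (ProbabilityMeasure (Y × U)) :=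
  {P | P.map measurable_fst.aemeasurable = Q}

/-- The relaxed policies induced by a measurable map from measurements to actions. -/
def deterministicPolicies {Y : Type*} (U : Type*) [MeasurableSpace Y] [MeasurableSpace U]
    (Q : ProbabilityMeasure Y) : Set (ProbabilityMeasure (Y × U)) :=
  {P | ∃ (γ : Y → U) (hγ : Measurable γ), policyLaw Q hγ = P}

section SingleDecisionMaker

variable {Y U : Type*} [MeasurableSpace Y] [MeasurableSpace U]

theorem deterministicPolicies_subset_relaxedPolicies (Q : ProbabilityMeasure Y) :
    deterministicPolicies U Q ⊆ relaxedPolicies U Q := by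
  rintro _ ⟨γ, hγ, rfl⟩
  apply Subtype.ext
  exact (Measure.map_map measurable_fst (measurable_id.prodMk hγ)).trans Measure.map_id

theorem nonempty_deterministicPolicies [Nonempty U] (Q : ProbabilityMeasure Y) :
    (deterministicPolicies U Q).Nonempty :=
  ⟨_, fun _ => Classical.arbitrary U, measurable_const, rfl⟩

variable [TopologicalSpace Y] [TopologicalSpace U] [CompactSpace U]
  [TopologicalSpace.MetrizableSpace U] [BorelSpace U]

theorem isCompact_relaxedPolicies [PolishSpace Y] [BorelSpace Y] (Q : ProbabilityMeasure Y) :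
    IsCompact (relaxedPolicies U Q) := by
  have isClosed_relaxed : IsClosed (relaxedPolicies U Q) :=
    isClosed_eq (ProbabilityMeasure.continuous_map continuous_fst) continuous_const
  rw [← isClosed_relaxed.closure_eq]
  apply isCompact_closure_of_isTightMeasureSet
  refine .prodMk ?_ .of_compactSpace
  refine (isTightMeasureSet_singleton (μ := (Q : Measure Y))).subset ?_
  rintro _ ⟨_, ⟨P, hP, rfl⟩, rfl⟩
  exact congrArg ProbabilityMeasure.toMeasure hP

theorem exists_deterministicPolicies_integral_le [OpensMeasurableSpace Y] [Nonempty U]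
    {Q : ProbabilityMeasure Y} {P : ProbabilityMeasure (Y × U)} (hP : P ∈ relaxedPolicies U Q)
    (g : (Y × U) →ᵇ ℝ) :
    ∃ D ∈ deterministicPolicies U Q, ∫ w, g w ∂D ≤ ∫ w, g w ∂P := by
  obtain ⟨γ, hγ, hmin⟩ := exists_measurable_argmin_of_continuous g.continuous
  have hgraph : Measurable fun y => (y, γ y) := measurable_id.prodMk hγ
  refine ⟨policyLaw Q hγ, ⟨γ, hγ, rfl⟩, ?_⟩
  calc ∫ w, g w ∂(policyLaw Q hγ)
      = ∫ y, g (y, γ y) ∂Q :=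
        integral_map hgraph.aemeasurable g.continuous.measurable.aestronglyMeasurable
    _ = ∫ w : Y × U, g (w.1, γ w.1) ∂P := by
        rw [← hP]
        exact integral_map measurable_fst.aemeasurable
          (g.continuous.measurable.comp hgraph).aestronglyMeasurable
    _ ≤ ∫ w, g w ∂P := by
        refine integral_mono (.of_bound ?_ ‖g‖ (ae_of_all _ fun w => g.norm_coe_le_norm _))
          (g.integrable _) fun w => hmin w.1 w.2
        exact (g.continuous.measurable.comp
          (hgraph.comp measurable_fst)).aestronglyMeasurable

end SingleDecisionMaker

/-- The expected value of `f` when its arguments are independent with laws `P i`; for a team, the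
`i`-th argument is the pair of measurement and action of decision maker `i`. -/
noncomputable def relaxedCost {ι : Type*} [Fintype ι] {Z : ι → Type*} [∀ i, MeasurableSpace (Z i)]
    (f : (∀ i, Z i) → ℝ) (P : ∀ i, ProbabilityMeasure (Z i)) : ℝ :=
  ∫ z, f z ∂(ProbabilityMeasure.pi P : Measure (∀ i, Z i))

section RelaxedCost

variable {ι : Type*} [Fintype ι] {Z : ι → Type*} [∀ i, MeasurableSpace (Z i)]

theorem relaxedCost_update [DecidableEq ι] {f : (∀ i, Z i) → ℝ} {P : ∀ i, ProbabilityMeasure (Z i)}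
    {i : ι} {ν : ProbabilityMeasure (Z i)}
    (hf : Integrable f (ProbabilityMeasure.pi (Function.update P i ν) : Measure (∀ i, Z i))) :
    relaxedCost f (Function.update P i ν) =
      ∫ w, ∫ z, f (Function.update z i w) ∂(ProbabilityMeasure.pi P : Measure (∀ i, Z i)) ∂ν := by
  rw [ProbabilityMeasure.toMeasure_pi, ← map_update_pi_prod] at hf
  rw [relaxedCost, ProbabilityMeasure.toMeasure_pi, ← map_update_pi_prod,
    integral_map measurable_update'.aemeasurable hf.aestronglyMeasurable]
  exact integral_prod_symm _ (hf.comp_measurable measurable_update')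

variable [∀ i, TopologicalSpace (Z i)] [∀ i, SecondCountableTopology (Z i)]
  [∀ i, OpensMeasurableSpace (Z i)]

theorem continuous_relaxedCost [∀ i, TopologicalSpace.PseudoMetrizableSpace (Z i)]
    (f : (∀ i, Z i) →ᵇ ℝ) : Continuous (relaxedCost f) :=
  (ProbabilityMeasure.continuous_integral_boundedContinuousFunction f).comp
    ProbabilityMeasure.continuous_pi

theorem exists_relaxedCost_update_eq_integral [DecidableEq ι] (f : (∀ i, Z i) →ᵇ ℝ)
    (P : ∀ i, ProbabilityMeasure (Z i)) (i : ι) :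
    ∃ g : Z i →ᵇ ℝ, ∀ ν : ProbabilityMeasure (Z i),
      relaxedCost f (Function.update P i ν) = ∫ w, g w ∂ν := by
  obtain ⟨g, hg⟩ := exists_boundedContinuousFunction_eq_integral
    (μ := (ProbabilityMeasure.pi P : Measure (∀ i, Z i)))
    (F := fun z w => f (Function.update z i w)) (h := fun _ => ‖f‖)
    (fun w => (f.continuous.comp
      (continuous_id.update i continuous_const)).measurable.aestronglyMeasurable)
    (fun z => f.continuous.comp (continuous_const.update i continuous_id))
    (integrable_const _) fun _ _ => f.norm_coe_le_norm _
  refine ⟨g, fun ν => ?_⟩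
  simp only [hg]
  exact relaxedCost_update (f.integrable _)

end RelaxedCost

theorem exists_mem_pi_le_of_forall_exists_update_le {ι α : Type*} [Finite ι] [DecidableEq ι]
    [Preorder α] {X : ι → Type*} {J : (∀ i, X i) → α} {S D : ∀ i, Set (X i)}
    (hDS : ∀ i, D i ⊆ S i)
    (improve : ∀ x ∈ Set.univ.pi S, ∀ i, ∃ d ∈ D i, J (Function.update x i d) ≤ J x)
    {x : ∀ i, X i} (hx : x ∈ Set.univ.pi S) :
    ∃ d ∈ Set.univ.pi D, J d ≤ J x := by
  have := Fintype.ofFinite ι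
  suffices ∀ t : Finset ι, ∃ d ∈ Set.univ.pi S, (∀ i ∈ t, d i ∈ D i) ∧ J d ≤ J x by
    obtain ⟨d, -, hdD, hdx⟩ := this Finset.univ
    exact ⟨d, fun i _ => hdD i (Finset.mem_univ i), hdx⟩
  intro t
  induction t using Finset.induction_on with
  | empty => exact ⟨x, hx, by simp, le_rfl⟩
  | insert i t _ ih =>
    obtain ⟨d, hdS, hdD, hdx⟩ := ih
    obtain ⟨e, he, hle⟩ := improve d hdS i
    refine ⟨Function.update d i e,
      (Set.update_mem_pi_iff_of_mem hdS).mpr fun _ => hDS i he, fun j hj => ?_, hle.trans hdx⟩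
    obtain rfl | hji := eq_or_ne j i
    · simpa only [Function.update_self] using he
    · simpa only [Function.update_of_ne hji] using hdD j (Finset.mem_of_mem_insert_of_ne hj hji)

section Team

variable {ι : Type*} [Fintype ι] {Y U : ι → Type*} [∀ i, MeasurableSpace (Y i)]
  [∀ i, MeasurableSpace (U i)]

theorem relaxedCost_policyLaw {f : (∀ i, Y i × U i) → ℝ} (hf : Measurable f)
    (Q : ∀ i, ProbabilityMeasure (Y i)) {γ : ∀ i, Y i → U i} (hγ : ∀ i, Measurable (γ i)) :
    relaxedCost f (fun i => policyLaw (Q i) (hγ i)) =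
      ∫ y, f (fun i => (y i, γ i (y i))) ∂(ProbabilityMeasure.pi Q : Measure (∀ i, Y i)) := by
  have hgraph : ∀ i, Measurable fun y => (y, γ i y) := fun i => measurable_id.prodMk (hγ i)
  have pi_policyLaw : (Measure.pi fun i => (policyLaw (Q i) (hγ i) : Measure (Y i × U i))) =
      (Measure.pi fun i => (Q i : Measure (Y i))).map fun y i => (y i, γ i (y i)) :=
    (Measure.pi_map_pi fun i => (hgraph i).aemeasurable).symm
  rw [relaxedCost, ProbabilityMeasure.toMeasure_pi, pi_policyLaw]
  exact integral_map (by fun_prop) hf.aestronglyMeasurable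

variable [∀ i, TopologicalSpace (Y i)] [∀ i, PolishSpace (Y i)] [∀ i, BorelSpace (Y i)]
  [∀ i, TopologicalSpace (U i)] [∀ i, CompactSpace (U i)]
  [∀ i, TopologicalSpace.MetrizableSpace (U i)] [∀ i, Nonempty (U i)] [∀ i, BorelSpace (U i)]

theorem exists_deterministicPolicies_isMinOn_relaxedCost
    (Q : ∀ i, ProbabilityMeasure (Y i)) (f : (∀ i, Y i × U i) →ᵇ ℝ) :
    ∃ D ∈ Set.univ.pi fun i => deterministicPolicies (U i) (Q i),
      IsMinOn (relaxedCost f) (Set.univ.pi fun i => relaxedPolicies (U i) (Q i)) D := by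
  classical
  have hsub := fun i => deterministicPolicies_subset_relaxedPolicies (U := U i) (Q i)
  obtain ⟨P, hP, hPmin⟩ := (isCompact_univ_pi fun i =>
    isCompact_relaxedPolicies (U := U i) (Q i)).exists_isMinOn
    (Set.univ_pi_nonempty_iff.mpr fun i => (nonempty_deterministicPolicies (Q i)).mono (hsub i))
    (continuous_relaxedCost f).continuousOn
  obtain ⟨D, hD, hDP⟩ := exists_mem_pi_le_of_forall_exists_update_le hsub (fun R hR i => by
    obtain ⟨g, hg⟩ := exists_relaxedCost_update_eq_integral f R i
    obtain ⟨d, hd, hle⟩ := exists_deterministicPolicies_integral_le (hR i (Set.mem_univ i)) g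
    rw [← hg, ← hg, Function.update_eq_self] at hle
    exact ⟨d, hd, hle⟩) hP
  exact ⟨D, hD, fun R hR => hDP.trans (hPmin hR)⟩

theorem static_team_exists_optimal_compact_continuous_general
    {Ω₀ : Type*} [MeasurableSpace Ω₀] (μ₀ : Measure Ω₀) [SFinite μ₀]
    (Q : ∀ i, Measure (Y i)) [∀ i, IsProbabilityMeasure (Q i)]
    {c : Ω₀ × (∀ i, Y i) × (∀ i, U i) → ℝ} (hc_meas : Measurable c)
    (hc_cont : ∀ ω, Continuous fun p => c (ω, p))
    {h : Ω₀ → ℝ} (hh : Integrable h μ₀) (hc_le : ∀ ω p, ‖c (ω, p)‖ ≤ h ω) :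
    ∃ γ : ∀ i, Y i → U i, (∀ i, Measurable (γ i)) ∧
      ∀ γ' : ∀ i, Y i → U i, (∀ i, Measurable (γ' i)) →
        (∫ p, c (p.1, p.2, fun i => γ i (p.2 i)) ∂(μ₀.prod (Measure.pi Q))) ≤
          ∫ p, c (p.1, p.2, fun i => γ' i (p.2 i)) ∂(μ₀.prod (Measure.pi Q)) := by
  let Q' : ∀ i, ProbabilityMeasure (Y i) := fun i => ⟨Q i, inferInstance⟩
  obtain ⟨f, hf⟩ := exists_boundedContinuousFunction_eq_integral (X := ∀ i, Y i × U i)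
    (F := fun ω z => c (ω, fun i => (z i).1, fun i => (z i).2))
    (fun z => (hc_meas.comp measurable_prodMk_right).aestronglyMeasurable)
    (fun ω => (hc_cont ω).comp (by fun_prop)) hh fun ω z => hc_le ω _
  have cost_eq : ∀ {γ : ∀ i, Y i → U i} (hγ : ∀ i, Measurable (γ i)),
      ∫ p, c (p.1, p.2, fun i => γ i (p.2 i)) ∂(μ₀.prod (Measure.pi Q)) =
        relaxedCost f fun i => policyLaw (Q' i) (hγ i) := by
    intro γ hγ
    rw [relaxedCost_policyLaw f.continuous.measurable]
    simp only [hf]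
    exact integral_prod_symm _ ((hh.comp_fst _).mono'
      (hc_meas.comp (by fun_prop)).aestronglyMeasurable (ae_of_all _ fun p => hc_le _ _))
  obtain ⟨D, hD, hDmin⟩ := exists_deterministicPolicies_isMinOn_relaxedCost Q' f
  choose γ hγ hγD using fun i => hD i (Set.mem_univ i)
  refine ⟨γ, hγ, fun γ' hγ' => ?_⟩
  rw [cost_eq hγ, cost_eq hγ', funext hγD]
  exact hDmin fun i _ => deterministicPolicies_subset_relaxedPolicies (Q' i) ⟨γ' i, hγ' i, rfl⟩

end Team

/-- Theorem 4.5 of the paper.  Consider a static team with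
`N` decision makers and independent measurements: `Ω₀` Polish with prior `μ₀`,
measurement spaces `Y i` Polish with laws `Q i`, compact metrizable action
spaces `U i`, the joint law of `(ω₀, y)` being the product measure
`μ₀ ⊗ ⨂ᵢ Q i`, and a continuous bounded cost
`c : Ω₀ × ∏ᵢ Y i × ∏ᵢ U i → [0,∞)`.  Then an optimal team policy exists:
there are Borel measurable `γ i : Y i → U i` minimizing the expected cost
`J γ = ∫ c (ω₀, y, (γ i (y i))ᵢ) d(μ₀ ⊗ ⨂ᵢ Q i)` over all measurable policies. -/
theorem static_team_exists_optimal_compact_continuous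
    {N : ℕ} {Ω₀ : Type*} {Y U : Fin N → Type*}
    [TopologicalSpace Ω₀] [PolishSpace Ω₀] [MeasurableSpace Ω₀] [BorelSpace Ω₀]
    [∀ i, TopologicalSpace (Y i)] [∀ i, PolishSpace (Y i)]
    [∀ i, MeasurableSpace (Y i)] [∀ i, BorelSpace (Y i)]
    [∀ i, TopologicalSpace (U i)] [∀ i, CompactSpace (U i)]
    [∀ i, TopologicalSpace.MetrizableSpace (U i)] [∀ i, Nonempty (U i)]
    [∀ i, MeasurableSpace (U i)] [∀ i, BorelSpace (U i)]
    (μ₀ : Measure Ω₀) [IsProbabilityMeasure μ₀]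
    (Q : ∀ i, Measure (Y i)) [∀ i, IsProbabilityMeasure (Q i)]
    (c : Ω₀ × (∀ i, Y i) × (∀ i, U i) → ℝ)
    (hc_cont : Continuous c)
    (hc_nonneg : ∀ p, 0 ≤ c p)
    (hc_bdd : ∃ C : ℝ, ∀ p, c p ≤ C) :
    ∃ γ : ∀ i, Y i → U i, (∀ i, Measurable (γ i)) ∧
      ∀ γ' : ∀ i, Y i → U i, (∀ i, Measurable (γ' i)) →
        (∫ p, c (p.1, p.2, fun i => γ i (p.2 i)) ∂(μ₀.prod (Measure.pi Q))) ≤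
          ∫ p, c (p.1, p.2, fun i => γ' i (p.2 i)) ∂(μ₀.prod (Measure.pi Q)) := by
  obtain ⟨C, hC⟩ := hc_bdd
  exact static_team_exists_optimal_compact_continuous_general μ₀ Q hc_cont.measurable
    (fun ω => hc_cont.comp (.prodMk_right ω)) (integrable_const C)
    fun ω p => (Real.norm_of_nonneg (hc_nonneg (ω, p))).trans_le (hC (ω, p))
end

section
/- Consider a static team with N decision makers and independent measurements in which each action space Uⁱ is compact metrizable and the cost c : Ω₀ × ∏ᵢYⁱ × ∏ᵢUⁱ → [0,∞) is continuous and bounded. Then the optimal team cost V(μ₀, Q¹, …, Qᴺ) = inf_γ J(γ) is a continuous function of the prior (μ₀, Q¹, …, Qᴺ), where each space of probability measures is equipped with the topology of weak convergence and the product carries the product topology. -/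
open MeasureTheory

/-!
The prior is moved to its limit one marginal law at a time, and every such move changes the value
by a vanishing amount. Consider the law `ν` of the measurement of decision maker `i`. By measurable
selection this decision maker may optimise after seeing the measurement, so the value is the
infimum over `γ` of the `ν`-integrals of the best-response costs against `γ`. The functions in this
family are as irregular in the other measurements as the policies are, but those are integrated
out against a weakly convergent law; together with the compactness of the action spaces this makes
the family equicontinuous in the limit, uniformly in `γ`. Weak convergence of `ν` is uniform over
bounded families of that kind (Ranga Rao), hence passes to the infimum.
-/

open Filter Function Set TopologicalSpace
open scoped BoundedContinuousFunction NNReal Topology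

section Infimum

variable {κ : Sort*} [Nonempty κ] {f g : κ → ℝ} {ε : ℝ}

lemma ciInf_le_ciInf_add (hf : BddBelow (range f)) (h : ∀ k, f k ≤ g k + ε) :
    ⨅ k, f k ≤ (⨅ k, g k) + ε :=
  sub_le_iff_le_add.1 <| le_ciInf fun k => sub_le_iff_le_add.2 <| (ciInf_le hf k).trans (h k)

lemma dist_ciInf_ciInf_le (hf : BddBelow (range f)) (hg : BddBelow (range g))
    (h : ∀ k, dist (f k) (g k) ≤ ε) : dist (⨅ k, f k) (⨅ k, g k) ≤ ε := by
  simp only [Real.dist_eq, abs_sub_le_iff, sub_le_iff_le_add'] at h ⊢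
  exact ⟨ciInf_le_ciInf_add hf fun k => (h k).1, ciInf_le_ciInf_add hg fun k => (h k).2⟩

lemma bddBelow_range_of_norm_le {κ : Sort*} {f : κ → ℝ} {M : ℝ} (h : ∀ k, ‖f k‖ ≤ M) :
    BddBelow (range f) :=
  ⟨-M, forall_mem_range.2 fun k => neg_le_of_abs_le (h k)⟩

lemma norm_ciInf_le {M : ℝ} (h : ∀ k, ‖f k‖ ≤ M) : ‖⨅ k, f k‖ ≤ M := by
  obtain ⟨k⟩ := ‹Nonempty κ›
  exact abs_le.2 ⟨le_ciInf fun k => neg_le_of_abs_le (h k),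
    (ciInf_le (bddBelow_range_of_norm_le h) k).trans (le_of_abs_le (h k))⟩

end Infimum

lemma norm_integral_le_of_forall_norm_le {X G : Type*} [MeasurableSpace X] {μ : Measure X}
    [IsProbabilityMeasure μ] [NormedAddCommGroup G] [NormedSpace ℝ G] {f : X → G} {M : ℝ}
    (h : ∀ x, ‖f x‖ ≤ M) : ‖∫ x, f x ∂μ‖ ≤ M := by
  simpa using norm_integral_le_of_norm_le_const (.of_forall h) (μ := μ)

lemma integrable_boundedContinuous_comp {X Z : Type*} [MeasurableSpace X] {μ : Measure X}
    [IsFiniteMeasure μ] [TopologicalSpace Z] [MeasurableSpace Z] [OpensMeasurableSpace Z]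
    (c : Z →ᵇ ℝ) {f : X → Z} (hf : Measurable f) : Integrable (fun x => c (f x)) μ :=
  .of_bound (c.continuous.measurable.comp hf).aestronglyMeasurable ‖c‖
    (.of_forall fun _ => c.norm_coe_le_norm _)

section MeasurableSelection

variable {X W : Type*} [MeasurableSpace X] [TopologicalSpace W] [SeparableSpace W]
  {h : X → W → ℝ}

lemma measurable_iInf_of_continuous_s9 (h_meas : ∀ w, Measurable fun x => h x w)
    (h_cont : ∀ x, Continuous (h x)) : Measurable fun x => ⨅ w, h x w := by
  obtain ⟨s, s_countable, s_dense⟩ := exists_countable_dense W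
  have : Countable s := s_countable
  simp only [← s_dense.ciInf' (h_cont _)]
  exact .iInf fun w => h_meas w

lemma exists_measurable_lt_iInf_add [MeasurableSpace W] [Nonempty W]
    (h_meas : ∀ w, Measurable fun x => h x w) (h_cont : ∀ x, Continuous (h x))
    {ε : ℝ} (hε : 0 < ε) :
    ∃ g : X → W, Measurable g ∧ ∀ x, h x (g x) < (⨅ w, h x w) + ε := by
  classical
  have exists_near (x : X) : ∃ n, h x (denseSeq W n) < (⨅ w, h x w) + ε :=
    (denseRange_denseSeq W).exists_mem_open
      (isOpen_lt (h_cont x) continuous_const) (exists_lt_of_ciInf_lt (lt_add_of_pos_right _ hε))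
  have first_meas : Measurable fun x => Nat.find (exists_near x) :=
    measurable_find _ fun n =>
      measurableSet_lt (h_meas _) ((measurable_iInf_of_continuous_s9 h_meas h_cont).add_const ε)
  exact ⟨fun x => denseSeq W (Nat.find (exists_near x)), measurable_from_nat.comp first_meas,
    fun x => Nat.find_spec (exists_near x)⟩

end MeasurableSelection

section UniformWeakConvergence

lemma exists_null_frontier_mem_nhds {X : Type*} [TopologicalSpace X] [PseudoMetrizableSpace X]
    [MeasurableSpace X] [OpensMeasurableSpace X] (μ : Measure X) [SFinite μ] {x : X} {V : Set X}
    (hV : V ∈ 𝓝 x) : ∃ B ∈ 𝓝 x, IsOpen B ∧ B ⊆ V ∧ μ (frontier B) = 0 := by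
  let := pseudoMetrizableSpacePseudoMetric X
  obtain ⟨r, r_pos, hr⟩ := Metric.mem_nhds_iff.1 hV
  obtain ⟨s, hs, frontier_null⟩ := exists_null_frontier_thickening μ {x} r_pos
  rw [Metric.thickening_singleton] at frontier_null
  exact ⟨Metric.ball x s, Metric.ball_mem_nhds x hs.1, Metric.isOpen_ball,
    (Metric.ball_subset_ball hs.2.le).trans hr, frontier_null⟩

lemma tendsto_measureReal_of_null_frontier {ι X : Type*} [TopologicalSpace X]
    [HasOuterApproxClosed X] [MeasurableSpace X] [OpensMeasurableSpace X] {l : Filter ι}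
    {ν : ι → ProbabilityMeasure X} {ν₀ : ProbabilityMeasure X} (hν : Tendsto ν l (𝓝 ν₀))
    {E : Set X} (hE : (ν₀ : Measure X) (frontier E) = 0) :
    Tendsto (fun i => (ν i : Measure X).real E) l (𝓝 ((ν₀ : Measure X).real E)) :=
  (ENNReal.tendsto_toReal (measure_ne_top _ E)).comp <|
    ProbabilityMeasure.tendsto_measure_of_null_frontier_of_tendsto' hν hE

variable {X : Type*} [TopologicalSpace X] [SecondCountableTopology X] [PseudoMetrizableSpace X]
  [MeasurableSpace X] [OpensMeasurableSpace X]

lemma exists_partition_null_frontier [Nonempty X] (μ : Measure X) [SFinite μ] {V : X → Set X}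
    (hV : ∀ x, V x ∈ 𝓝 x) :
    ∃ (t : ℕ → X) (E : ℕ → Set X), (∀ n, E n ⊆ V (t n)) ∧ (∀ n, MeasurableSet (E n)) ∧
      (∀ n, μ (frontier (E n)) = 0) ∧ Pairwise (Disjoint on E) ∧ ⋃ n, E n = univ := by
  choose B B_nhds B_open B_subset B_null using fun x => exists_null_frontier_mem_nhds μ (hV x)
  obtain ⟨s, s_countable, s_cover⟩ := TopologicalSpace.countable_cover_nhds B_nhds
  have s_nonempty : s.Nonempty := nonempty_iff_ne_empty.2 <| by
    rintro rfl
    exact empty_ne_univ (by simpa using s_cover)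
  obtain ⟨t, rfl⟩ := s_countable.exists_eq_range s_nonempty
  refine ⟨t, disjointed fun n => B (t n), fun n => (disjointed_subset _ n).trans (B_subset _),
    fun n => .disjointed (fun k => (B_open _).measurableSet) n, fun n => ?_,
    disjoint_disjointed _, by rwa [iUnion_disjointed, ← biUnion_range (g := B)]⟩
  exact disjointedRec (p := fun s => μ (frontier s) = 0)
    (fun s k hs => by
      rw [Set.sdiff_eq]
      exact null_frontier_inter hs (by rw [frontier_compl]; exact B_null _)) (B_null _)

lemma norm_integral_sub_sum_le {X G ι : Type*} [MeasurableSpace X] {μ : Measure X}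
    [IsProbabilityMeasure μ] [NormedAddCommGroup G] [NormedSpace ℝ G] [CompleteSpace G]
    {f : X → G} (hf : AEStronglyMeasurable f μ) {M ε : ℝ} (f_le : ∀ x, ‖f x‖ ≤ M) (hε : 0 ≤ ε)
    {s : Finset ι} {E : ι → Set X} (E_meas : ∀ k ∈ s, MeasurableSet (E k))
    (E_disj : (s : Set ι).PairwiseDisjoint E) {a : ι → G}
    (f_near : ∀ k ∈ s, ∀ x ∈ E k, ‖f x - a k‖ ≤ ε) :
    ‖∫ x, f x ∂μ - ∑ k ∈ s, μ.real (E k) • a k‖ ≤ ε + M * (1 - ∑ k ∈ s, μ.real (E k)) := by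
  have f_int : Integrable f μ := .of_bound hf M (.of_forall f_le)
  set F := ⋃ k ∈ s, E k
  have F_meas : MeasurableSet F := s.measurableSet_biUnion E_meas
  have F_real : μ.real F = ∑ k ∈ s, μ.real (E k) := measureReal_biUnion_finset E_disj E_meas
  have on_F : ‖∫ x in F, f x ∂μ - ∑ k ∈ s, μ.real (E k) • a k‖ ≤ ε := by
    rw [integral_biUnion_finset s E_meas E_disj fun k _ => f_int.integrableOn,
      ← Finset.sum_sub_distrib]
    calc ‖∑ k ∈ s, (∫ x in E k, f x ∂μ - μ.real (E k) • a k)‖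
        ≤ ∑ k ∈ s, ε * μ.real (E k) := norm_sum_le_of_le s fun k hk => by
          rw [← setIntegral_const, ← integral_sub f_int.integrableOn (integrable_const _)]
          exact norm_setIntegral_le_of_norm_le_const (measure_lt_top μ _) (f_near k hk)
      _ = ε * μ.real F := by rw [← Finset.mul_sum, F_real]
      _ ≤ ε := mul_le_of_le_one_right hε measureReal_le_one
  have on_compl : ‖∫ x in Fᶜ, f x ∂μ‖ ≤ M * (1 - ∑ k ∈ s, μ.real (E k)) := by
    rw [← F_real, ← probReal_compl_eq_one_sub F_meas]
    exact norm_setIntegral_le_of_norm_le_const (measure_lt_top μ _) fun x _ => f_le x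
  rw [← integral_add_compl F_meas f_int, add_sub_right_comm]
  exact norm_add_le_of_le on_F on_compl

lemma dist_integral_integral_le_of_partition {X G ι : Type*} [MeasurableSpace X]
    {μ ν : Measure X} [IsProbabilityMeasure μ] [IsProbabilityMeasure ν] [NormedAddCommGroup G]
    [NormedSpace ℝ G] [CompleteSpace G] {f : X → G} (hf : StronglyMeasurable f) {M ε : ℝ}
    (f_le : ∀ x, ‖f x‖ ≤ M) (hε : 0 ≤ ε) {s : Finset ι} {E : ι → Set X}
    (E_meas : ∀ k ∈ s, MeasurableSet (E k)) (E_disj : (s : Set ι).PairwiseDisjoint E) {t : ι → X}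
    (f_near : ∀ k ∈ s, ∀ x ∈ E k, ‖f x - f (t k)‖ ≤ ε) :
    dist (∫ x, f x ∂μ) (∫ x, f x ∂ν) ≤ ε + M * (1 - ∑ k ∈ s, μ.real (E k)) +
      (∑ k ∈ s, |μ.real (E k) - ν.real (E k)| * M) + (ε + M * (1 - ∑ k ∈ s, ν.real (E k))) := by
  have sums_near : dist (∑ k ∈ s, μ.real (E k) • f (t k)) (∑ k ∈ s, ν.real (E k) • f (t k)) ≤
      ∑ k ∈ s, |μ.real (E k) - ν.real (E k)| * M :=
    dist_sum_sum_le_of_le s fun k _ => by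
      rw [dist_eq_norm, ← sub_smul, norm_smul, Real.norm_eq_abs]
      exact mul_le_mul_of_nonneg_left (f_le _) (abs_nonneg _)
  refine (dist_triangle4 _ _ _ _).trans (add_le_add_three ?_ sums_near ?_)
  · rw [dist_eq_norm]
    exact norm_integral_sub_sum_le hf.aestronglyMeasurable f_le hε E_meas E_disj f_near
  · rw [dist_comm, dist_eq_norm]
    exact norm_integral_sub_sum_le hf.aestronglyMeasurable f_le hε E_meas E_disj f_near

/-- Equicontinuity of the families `f i = (f i k)ₖ` in the limit along `l`: the oscillation of the
members of `f i` near a point is controlled for `i` far along `l`, where how far may depend on the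
point. -/
def EventuallyEquicontinuous {ι κ X G : Type*} [TopologicalSpace X] [PseudoMetricSpace G]
    (l : Filter ι) (f : ι → κ → X → G) : Prop :=
  ∀ x, ∀ ε > 0, ∀ᶠ p in l ×ˢ 𝓝 x, ∀ k, dist (f p.1 k p.2) (f p.1 k x) ≤ ε

variable {ι κ G : Type*} {l : Filter ι}

lemma exists_finset_partition_null_frontier [NormedAddCommGroup G] {f : ι → κ → X → G}
    (f_equi : EventuallyEquicontinuous l f) (μ : Measure X) [IsProbabilityMeasure μ]
    {ε : ℝ} (hε : 0 < ε) :
    ∃ (t : ℕ → X) (E : ℕ → Set X) (s : Finset ℕ), (∀ n, MeasurableSet (E n)) ∧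
      (∀ n, μ (frontier (E n)) = 0) ∧ Pairwise (Disjoint on E) ∧
      1 - ε < ∑ n ∈ s, μ.real (E n) ∧
      ∀ᶠ i in l, ∀ k, ∀ n ∈ s, ∀ x ∈ E n, ‖f i k x - f i k (t n)‖ ≤ ε := by
  have : Nonempty X := nonempty_of_isProbabilityMeasure μ
  choose S hS V hV f_near using fun x => mem_prod_iff.1 (f_equi x ε hε)
  obtain ⟨t, E, E_subset, E_meas, E_null, E_disj, E_cover⟩ := exists_partition_null_frontier μ hV
  have mass : HasSum (fun n => μ.real (E n)) 1 := by
    simpa [E_cover] using hasSum_integral_iUnion E_meas E_disj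
      (integrable_const (1 : ℝ)).integrableOn (μ := μ)
  obtain ⟨s, hs⟩ := (mass.eventually_const_lt (sub_lt_self 1 hε)).exists
  refine ⟨t, E, s, E_meas, E_null, E_disj, hs, ?_⟩
  filter_upwards [s.eventually_all.2 fun n _ => hS (t n)] with i hi k n hn x hx
  rw [← dist_eq_norm]
  exact f_near (t n) (mk_mem_prod (hi n hn) (E_subset n hx)) k

-- Ranga Rao's theorem: freezing each function on the cells of a finite partition into continuity
-- sets leaves only finitely many masses, and these converge by the portmanteau theorem.
lemma EventuallyEquicontinuous.eventually_dist_integral_le [NormedAddCommGroup G] [NormedSpace ℝ G]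
    [CompleteSpace G] {f : ι → κ → X → G} (f_equi : EventuallyEquicontinuous l f)
    (f_meas : ∀ i k, StronglyMeasurable (f i k)) {M : ℝ≥0} (f_le : ∀ i k x, ‖f i k x‖ ≤ M)
    {ν : ι → ProbabilityMeasure X} {ν₀ : ProbabilityMeasure X} (hν : Tendsto ν l (𝓝 ν₀))
    {ε : ℝ} (hε : 0 < ε) :
    ∀ᶠ i in l, ∀ k, dist (∫ x, f i k x ∂ν i) (∫ x, f i k x ∂ν₀) ≤ ε := by
  obtain ⟨δ, δ_small, δ_pos⟩ : ∃ δ, 2 * (δ + M * δ) < ε ∧ 0 < δ := by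
    have : Tendsto (fun δ : ℝ => 2 * (δ + M * δ)) (𝓝[>] 0) (𝓝 0) :=
      tendsto_nhdsWithin_of_tendsto_nhds (Continuous.tendsto' (by fun_prop) _ _ (by simp))
    exact ((this.eventually_lt_const hε).and self_mem_nhdsWithin).exists
  obtain ⟨t, E, s, E_meas, E_null, E_disj, mass_gt, f_near⟩ :=
    exists_finset_partition_null_frontier f_equi (ν₀ : Measure X) δ_pos
  let mass (ν : ProbabilityMeasure X) (n : ℕ) : ℝ := (ν : Measure X).real (E n)
  let bound (m : ℕ → ℝ) : ℝ := δ + M * (1 - ∑ n ∈ s, m n) +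
    (∑ n ∈ s, |m n - mass ν₀ n| * M) + (δ + M * (1 - ∑ n ∈ s, mass ν₀ n))
  have mass_tendsto : Tendsto (fun i => mass (ν i)) l (𝓝 (mass ν₀)) :=
    tendsto_pi_nhds.2 fun n => tendsto_measureReal_of_null_frontier hν (E_null n)
  have bound_lt : bound (mass ν₀) < ε := by
    have : (M : ℝ) * (1 - ∑ n ∈ s, mass ν₀ n) ≤ M * δ :=
      mul_le_mul_of_nonneg_left (sub_le_comm.1 mass_gt.le) M.coe_nonneg
    simp only [bound, sub_self, abs_zero, zero_mul, Finset.sum_const_zero]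
    linarith
  have bound_continuous : Continuous bound := by fun_prop
  filter_upwards [f_near, ((bound_continuous.tendsto _).comp mass_tendsto).eventually_lt_const
    bound_lt] with i f_near_i bound_lt_i k
  exact (dist_integral_integral_le_of_partition (f_meas i k) (f_le i k) δ_pos.le
    (fun n _ => E_meas n) (E_disj.set_pairwise _) (f_near_i k)).trans bound_lt_i.le

lemma EventuallyEquicontinuous.tendsto_iInf_integral_sub [Nonempty κ] {f : ι → κ → X → ℝ}
    (f_equi : EventuallyEquicontinuous l f) (f_meas : ∀ i k, Measurable (f i k)) {M : ℝ≥0}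
    (f_le : ∀ i k x, ‖f i k x‖ ≤ M) {ν : ι → ProbabilityMeasure X} {ν₀ : ProbabilityMeasure X}
    (hν : Tendsto ν l (𝓝 ν₀)) :
    Tendsto (fun i => (⨅ k, ∫ x, f i k x ∂ν i) - ⨅ k, ∫ x, f i k x ∂ν₀) l (𝓝 0) := by
  have bddBelow (μ : ProbabilityMeasure X) (i : ι) : BddBelow (range fun k => ∫ x, f i k x ∂μ) :=
    bddBelow_range_of_norm_le fun k => norm_integral_le_of_forall_norm_le (f_le i k)
  refine Metric.tendsto_nhds.2 fun ε hε => ?_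
  filter_upwards [f_equi.eventually_dist_integral_le (fun i k => (f_meas i k).stronglyMeasurable)
    f_le hν (half_pos hε)] with i hi
  rw [dist_zero_right, ← dist_eq_norm]
  exact (dist_ciInf_ciInf_le (bddBelow _ i) (bddBelow _ i) hi).trans_lt (half_lt_self hε)

lemma EventuallyEquicontinuous.ciInf {ι κ W X : Type*} [Nonempty W] [TopologicalSpace X]
    {l : Filter ι} {f : ι → κ × W → X → ℝ} (f_equi : EventuallyEquicontinuous l f)
    (f_bdd : ∀ i k x, BddBelow (range fun w => f i (k, w) x)) :
    EventuallyEquicontinuous l fun i k x => ⨅ w, f i (k, w) x := fun x ε hε =>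
  (f_equi x ε hε).mono fun p hp k =>
    dist_ciInf_ciInf_le (f_bdd p.1 k p.2) (f_bdd p.1 k x) fun w => hp (k, w)

end UniformWeakConvergence

section PartialIntegral

lemma exists_boundedContinuous_dist_le {A B V : Type*} [TopologicalSpace A] [TopologicalSpace B]
    [TopologicalSpace V] [CompactSpace V] (C : A × B × V →ᵇ ℝ) (b₀ : B) :
    ∃ D : A × B →ᵇ ℝ, (∀ a, D (a, b₀) = 0) ∧
      ∀ a b v, dist (C (a, b, v)) (C (a, b₀, v)) ≤ D (a, b) := by
  let slice : C(A × B, C(V, ℝ)) := (C.toContinuousMap.comp (Homeomorph.prodAssoc A B V)).curry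
  have dist_slice_le (p : A × B) : dist (slice p) (slice (p.1, b₀)) ≤ 2 * ‖C‖ :=
    (ContinuousMap.dist_le (by positivity)).2 fun v => C.dist_le_two_norm _ _
  exact ⟨.ofNormedAddCommGroup (fun p => dist (slice p) (slice (p.1, b₀))) (by fun_prop) (2 * ‖C‖)
      fun p => by simpa only [Real.norm_of_nonneg dist_nonneg] using dist_slice_le p,
    fun a => dist_self (slice (a, b₀)), fun a b v => ContinuousMap.dist_apply_le_dist
      (f := slice (a, b)) (g := slice (a, b₀)) v⟩

variable {A B V : Type*} [TopologicalSpace A] [SecondCountableTopology A]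
  [PseudoMetrizableSpace A] [MeasurableSpace A] [OpensMeasurableSpace A] [TopologicalSpace B]
  [SecondCountableTopology B] [PseudoMetrizableSpace B] [MeasurableSpace B]
  [OpensMeasurableSpace B]

lemma continuous_integral_probabilityMeasure_prod (D : A × B →ᵇ ℝ) :
    Continuous fun p : ProbabilityMeasure A × B => ∫ a, D (a, p.2) ∂p.1 := by
  have law_continuous :
      Continuous fun p : ProbabilityMeasure A × B => p.1.prod (diracProba p.2) :=
    ProbabilityMeasure.continuous_prod.comp
      (continuous_fst.prodMk (continuous_diracProba.comp continuous_snd))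
  have integral_law (p : ProbabilityMeasure A × B) :
      ∫ z, D z ∂p.1.prod (diracProba p.2) = ∫ a, D (a, p.2) ∂p.1 := by
    rw [ProbabilityMeasure.toMeasure_prod, diracProba, ProbabilityMeasure.coe_mk,
      Measure.prod_dirac, integral_map (by fun_prop) D.continuous.aestronglyMeasurable]
  simp only [← integral_law]
  exact continuous_iff_continuousAt.2 fun p =>
    ProbabilityMeasure.tendsto_iff_forall_integral_tendsto.1 (law_continuous.tendsto p) D

lemma eventuallyEquicontinuous_integral {ι κ : Type*} {l : Filter ι} [TopologicalSpace V]
    [CompactSpace V] [MeasurableSpace V] [OpensMeasurableSpace V] (C : A × B × V →ᵇ ℝ)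
    {α : ι → ProbabilityMeasure A} {α₀ : ProbabilityMeasure A} (hα : Tendsto α l (𝓝 α₀))
    {g : κ → A → V} (g_meas : ∀ k, Measurable (g k)) :
    EventuallyEquicontinuous l fun i k b => ∫ a, C (a, b, g k a) ∂α i := by
  intro b₀ ε hε
  obtain ⟨D, D_zero, dist_le_D⟩ := exists_boundedContinuous_dist_le C b₀
  have integral_D_tendsto :
      Tendsto (fun p => ∫ a, D (a, p.2) ∂α p.1) (l ×ˢ 𝓝 b₀) (𝓝 0) := by
    simpa [D_zero, comp_def] using
      ((continuous_integral_probabilityMeasure_prod D).tendsto (α₀, b₀)).comp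
        ((hα.comp tendsto_fst).prodMk_nhds tendsto_snd)
  have integrable_slice (μ : ProbabilityMeasure A) (b : B) (k : κ) :
      Integrable (fun a => C (a, b, g k a)) μ :=
    integrable_boundedContinuous_comp
      (C.compContinuous ⟨fun z : A × V => (z.1, b, z.2), by fun_prop⟩)
      (measurable_id.prodMk (g_meas k))
  have integrable_D (μ : ProbabilityMeasure A) (b : B) : Integrable (fun a => D (a, b)) μ :=
    integrable_boundedContinuous_comp D (by fun_prop)
  filter_upwards [integral_D_tendsto.eventually_le_const hε] with p hp k
  refine le_trans ?_ hp
  rw [dist_eq_norm, ← integral_sub (integrable_slice _ _ k) (integrable_slice _ _ k)]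
  exact norm_integral_le_of_norm_le (integrable_D _ _)
    (.of_forall fun a => dist_le_D a p.2 _)

end PartialIntegral

section Telescoping

lemma continuousAt_of_tendsto_sub_update {ι Z G : Type*} {X : ι → Type*} [Finite ι] [DecidableEq ι]
    [TopologicalSpace Z] [∀ i, TopologicalSpace (X i)] [AddGroup G] [TopologicalSpace G]
    [ContinuousAdd G] {f : Z × (∀ i, X i) → G} {q₀ : Z × (∀ i, X i)}
    (h_fst : Tendsto (fun q => f q - f (q₀.1, q.2)) (𝓝 q₀) (𝓝 0))
    (h_update : ∀ i, Tendsto (fun q => f q - f (q.1, update q.2 i (q₀.2 i))) (𝓝 q₀) (𝓝 0)) :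
    ContinuousAt f q₀ := by
  cases nonempty_fintype ι
  let freeze (s : Finset ι) (q : Z × (∀ i, X i)) : Z × (∀ i, X i) := (q.1, s.piecewise q₀.2 q.2)
  have freeze_tendsto (s : Finset ι) : Tendsto (freeze s) (𝓝 q₀) (𝓝 q₀) := by
    have : Continuous (freeze s) := by
      refine continuous_fst.prodMk (continuous_pi fun i => ?_)
      by_cases hi : i ∈ s <;> simp only [Finset.piecewise, hi, if_true, if_false] <;> fun_prop
    exact this.tendsto' q₀ q₀ (by simp only [freeze, Finset.piecewise_same])
  have sub_freeze_tendsto (s : Finset ι) :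
      Tendsto (fun q => f q - f (freeze s q)) (𝓝 q₀) (𝓝 0) := by
    induction s using Finset.induction_on with
    | empty => simpa [freeze] using tendsto_const_nhds
    | insert i s _ ih =>
      simpa [freeze, Finset.piecewise_insert, comp_def] using
        ih.add ((h_update i).comp (freeze_tendsto s))
  have : Tendsto (fun q => f q - f q₀) (𝓝 q₀) (𝓝 0) := by
    simpa [freeze, comp_def] using
      (sub_freeze_tendsto .univ).add (h_fst.comp (freeze_tendsto .univ))
  simpa [ContinuousAt] using this.add_const (f q₀)

end Telescoping

section Team

variable {ι Ω : Type*} {Y U : ι → Type*} [MeasurableSpace Ω] [∀ i, MeasurableSpace (Y i)]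
  [∀ i, MeasurableSpace (U i)]

/-- A deterministic team policy: decision maker `i` chooses an action in `U i` as a measurable
function of the measurement in `Y i`. -/
structure TeamPolicy (Y U : ι → Type*) [∀ i, MeasurableSpace (Y i)]
    [∀ i, MeasurableSpace (U i)] where
  rule : ∀ i, Y i → U i
  measurable_rule : ∀ i, Measurable (rule i)

namespace TeamPolicy

/-- The profile of actions taken under the policy `γ` when the measurements are `y`. -/
def act (γ : TeamPolicy Y U) (y : ∀ i, Y i) : ∀ i, U i := fun i => γ.rule i (y i)

@[fun_prop]
lemma measurable_act (γ : TeamPolicy Y U) : Measurable γ.act :=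
  measurable_pi_lambda _ fun i => (γ.measurable_rule i).comp (measurable_pi_apply i)

instance [∀ i, Nonempty (U i)] : Nonempty (TeamPolicy Y U) :=
  ⟨fun _ _ => Classical.ofNonempty, fun _ => measurable_const⟩

variable [DecidableEq ι]

/-- The policy in which decision maker `i` deviates from `γ` to the rule `g`. -/
def deviate (γ : TeamPolicy Y U) (i : ι) (g : Y i → U i) (hg : Measurable g) :
    TeamPolicy Y U where
  rule := update γ.rule i g
  measurable_rule := (forall_update_iff γ.rule fun _ => Measurable).2
    ⟨hg, fun j _ => γ.measurable_rule j⟩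

lemma deviate_rule_self (γ : TeamPolicy Y U) (i : ι) :
    γ.deviate i (γ.rule i) (γ.measurable_rule i) = γ := by
  simp [deviate]

lemma deviate_act_update (γ : TeamPolicy Y U) (i : ι) {g : Y i → U i} (hg : Measurable g)
    (z : ∀ j, Y j) (y : Y i) :
    (γ.deviate i g hg).act (update z i y) = update (γ.act z) i (g y) := by
  ext j
  rcases eq_or_ne j i with rfl | hj
  · simp [act, deviate]
  · simp [act, deviate, hj]

end TeamPolicy

variable [Fintype ι]

/-- The law of the exogenous variable and the independent measurements under the prior `q`. -/
noncomputable def jointLaw (q : ProbabilityMeasure Ω × (∀ i, ProbabilityMeasure (Y i))) :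
    ProbabilityMeasure (Ω × (∀ i, Y i)) :=
  q.1.prod (.pi q.2)

lemma continuous_jointLaw [TopologicalSpace Ω] [SecondCountableTopology Ω]
    [PseudoMetrizableSpace Ω] [OpensMeasurableSpace Ω] [∀ i, TopologicalSpace (Y i)]
    [∀ i, SecondCountableTopology (Y i)] [∀ i, PseudoMetrizableSpace (Y i)]
    [∀ i, OpensMeasurableSpace (Y i)] : Continuous (jointLaw (Ω := Ω) (Y := Y)) := by
  unfold jointLaw
  fun_prop

lemma measurePreserving_update [DecidableEq ι] (Q : ∀ i, ProbabilityMeasure (Y i)) (i : ι)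
    (ν : ProbabilityMeasure (Y i)) :
    MeasurePreserving (fun p : (∀ j, Y j) × Y i => update p.1 i p.2)
      ((ProbabilityMeasure.pi Q : Measure (∀ j, Y j)).prod ν)
      (ProbabilityMeasure.pi (update Q i ν) : Measure (∀ j, Y j)) := by
  refine ⟨measurable_update', (Measure.pi_eq fun s hs => ?_).symm⟩
  have preimage_eq : (fun p : (∀ j, Y j) × Y i => update p.1 i p.2) ⁻¹' univ.pi s =
      univ.pi (update s i univ) ×ˢ s i := by
    ext p
    simp only [mem_preimage, mem_prod, mem_univ_pi,
      forall_update_iff p.1 fun j y => y ∈ s j, forall_update_iff s fun j t => p.1 j ∈ t,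
      mem_univ, true_and, and_comm]
  rw [Measure.map_apply measurable_update' (.univ_pi hs), preimage_eq, Measure.prod_prod,
    ProbabilityMeasure.toMeasure_pi, Measure.pi_pi, Fintype.prod_eq_mul_prod_compl i,
    Fintype.prod_eq_mul_prod_compl i]
  simp only [update_self, measure_univ, one_mul]
  rw [mul_comm]
  congr 1
  refine Finset.prod_congr rfl fun j hj => ?_
  have : j ≠ i := by simpa using hj
  simp [this]

lemma measurePreserving_jointLaw_update [DecidableEq ι]
    (q : ProbabilityMeasure Ω × (∀ i, ProbabilityMeasure (Y i))) (i : ι)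
    (ν : ProbabilityMeasure (Y i)) :
    MeasurePreserving (fun p : (Ω × (∀ j, Y j)) × Y i => (p.1.1, update p.1.2 i p.2))
      ((jointLaw q : Measure (Ω × (∀ j, Y j))).prod ν)
      (jointLaw (q.1, update q.2 i ν) : Measure (Ω × (∀ j, Y j))) :=
  ((MeasurePreserving.id _).prod (measurePreserving_update q.2 i ν)).comp
    (measurePreserving_prodAssoc _ _ _)

variable [TopologicalSpace Ω] [∀ i, TopologicalSpace (Y i)] [∀ i, TopologicalSpace (U i)]

/-- The expected cost `J(γ)` of the policy `γ` under the prior `q`. -/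
noncomputable def teamCost (c : Ω × (∀ i, Y i) × (∀ i, U i) →ᵇ ℝ) (γ : TeamPolicy Y U)
    (q : ProbabilityMeasure Ω × (∀ i, ProbabilityMeasure (Y i))) : ℝ :=
  ∫ p, c (p.1, p.2, γ.act p.2) ∂(jointLaw q : Measure (Ω × (∀ i, Y i)))

/-- The optimal team cost `V(q)` under the prior `q`. -/
noncomputable def teamValue (c : Ω × (∀ i, Y i) × (∀ i, U i) →ᵇ ℝ)
    (q : ProbabilityMeasure Ω × (∀ i, ProbabilityMeasure (Y i))) : ℝ :=
  ⨅ γ : TeamPolicy Y U, teamCost c γ q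

/-- The expected cost of `γ` given the value `ω` of the exogenous variable, when the measurements
have marginal laws `Q`. -/
noncomputable def exogenousCost (c : Ω × (∀ i, Y i) × (∀ i, U i) →ᵇ ℝ) (γ : TeamPolicy Y U)
    (Q : ∀ i, ProbabilityMeasure (Y i)) (ω : Ω) : ℝ :=
  ∫ z, c (ω, z, γ.act z) ∂(ProbabilityMeasure.pi Q : Measure (∀ i, Y i))

/-- The expected cost given that decision maker `i` measures `y` and plays `u` while the others
follow `γ`. The `i`-th measurement sampled from `jointLaw q` is overwritten by `y`. -/
noncomputable def conditionalCost [DecidableEq ι] (c : Ω × (∀ i, Y i) × (∀ i, U i) →ᵇ ℝ)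
    (γ : TeamPolicy Y U) (i : ι) (q : ProbabilityMeasure Ω × (∀ i, ProbabilityMeasure (Y i)))
    (y : Y i) (u : U i) : ℝ :=
  ∫ p, c (p.1, update p.2 i y, update (γ.act p.2) i u) ∂(jointLaw q : Measure (Ω × (∀ i, Y i)))

/-- The least conditional cost decision maker `i` can achieve against `γ` after measuring `y`. -/
noncomputable def bestResponseCost [DecidableEq ι] (c : Ω × (∀ i, Y i) × (∀ i, U i) →ᵇ ℝ)
    (γ : TeamPolicy Y U) (i : ι) (q : ProbabilityMeasure Ω × (∀ i, ProbabilityMeasure (Y i)))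
    (y : Y i) : ℝ :=
  ⨅ u, conditionalCost c γ i q y u

variable (c : Ω × (∀ i, Y i) × (∀ i, U i) →ᵇ ℝ) (γ : TeamPolicy Y U) (i : ι)
  (q : ProbabilityMeasure Ω × (∀ i, ProbabilityMeasure (Y i)))

lemma teamValue_eq_sInf :
    teamValue c q = sInf {r : ℝ | ∃ γ : ∀ i, Y i → U i, (∀ i, Measurable (γ i)) ∧
      r = ∫ p, c (p.1, p.2, fun i => γ i (p.2 i))
        ∂(q.1 : Measure Ω).prod (Measure.pi fun i => (q.2 i : Measure (Y i)))} :=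
  congrArg sInf <| Set.ext fun _ => ⟨fun ⟨γ, h⟩ => ⟨γ.rule, γ.measurable_rule, h.symm⟩,
    fun ⟨γ, hγ, h⟩ => ⟨⟨γ, hγ⟩, h.symm⟩⟩

lemma norm_teamCost_le : ‖teamCost c γ q‖ ≤ ‖c‖ :=
  norm_integral_le_of_forall_norm_le fun _ => c.norm_coe_le_norm _

section ExogenousVariable

variable [OpensMeasurableSpace Ω] [SecondCountableTopology Ω]
  [∀ i, SecondCountableTopology (Y i)] [∀ i, OpensMeasurableSpace (Y i)]
  [∀ i, SecondCountableTopology (U i)] [∀ i, OpensMeasurableSpace (U i)]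

lemma continuous_exogenousCost (Q : ∀ i, ProbabilityMeasure (Y i)) :
    Continuous (exogenousCost c γ Q) :=
  continuous_of_dominated (bound := fun _ => ‖c‖)
    (fun ω => (integrable_boundedContinuous_comp c (by fun_prop)).aestronglyMeasurable)
    (fun ω => .of_forall fun _ => c.norm_coe_le_norm _) (integrable_const _)
    (.of_forall fun z => by fun_prop)

lemma teamCost_eq_integral_exogenousCost : teamCost c γ q = ∫ ω, exogenousCost c γ q.2 ω ∂q.1 :=
  integral_prod _ (integrable_boundedContinuous_comp c (by fun_prop))

variable [PseudoMetrizableSpace Ω] [∀ i, PseudoMetrizableSpace (Y i)] [∀ i, CompactSpace (U i)]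
  (q₀ : ProbabilityMeasure Ω × (∀ i, ProbabilityMeasure (Y i)))

lemma eventuallyEquicontinuous_exogenousCost :
    EventuallyEquicontinuous (𝓝 q₀) fun q (γ : TeamPolicy Y U) => exogenousCost c γ q.2 :=
  eventuallyEquicontinuous_integral
    (c.compContinuous ⟨fun p : (∀ j, Y j) × Ω × (∀ j, U j) => (p.2.1, p.1, p.2.2), by fun_prop⟩)
    ((ProbabilityMeasure.continuous_pi.comp continuous_snd).tendsto q₀)
    TeamPolicy.measurable_act

lemma tendsto_teamValue_sub_fst [∀ i, Nonempty (U i)] :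
    Tendsto (fun q => teamValue c q - teamValue c (q₀.1, q.2)) (𝓝 q₀) (𝓝 0) := by
  simp only [teamValue, teamCost_eq_integral_exogenousCost]
  exact (eventuallyEquicontinuous_exogenousCost c q₀).tendsto_iInf_integral_sub
    (fun q γ => (continuous_exogenousCost c γ q.2).measurable)
    (M := ‖c‖₊) (fun _ _ _ => norm_integral_le_of_forall_norm_le fun _ => c.norm_coe_le_norm _)
    (continuous_fst.tendsto q₀)

end ExogenousVariable

section Measurement

variable [DecidableEq ι]

lemma norm_conditionalCost_le (y : Y i) (u : U i) : ‖conditionalCost c γ i q y u‖ ≤ ‖c‖ :=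
  norm_integral_le_of_forall_norm_le fun _ => c.norm_coe_le_norm _

lemma norm_bestResponseCost_le [Nonempty (U i)] (y : Y i) : ‖bestResponseCost c γ i q y‖ ≤ ‖c‖ :=
  norm_ciInf_le (norm_conditionalCost_le c γ i q y)

variable [OpensMeasurableSpace Ω] [∀ i, SecondCountableTopology (Y i)]
  [∀ i, OpensMeasurableSpace (Y i)] [∀ i, SecondCountableTopology (U i)]
  [∀ i, OpensMeasurableSpace (U i)]

lemma continuous_conditionalCost :
    Continuous fun p : Y i × U i => conditionalCost c γ i q p.1 p.2 :=
  continuous_of_dominated (bound := fun _ => ‖c‖)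
    (fun p => (integrable_boundedContinuous_comp c (by fun_prop)).aestronglyMeasurable)
    (fun p => .of_forall fun _ => c.norm_coe_le_norm _) (integrable_const _)
    (.of_forall fun p => by fun_prop)

lemma measurable_bestResponseCost : Measurable (bestResponseCost c γ i q) :=
  measurable_iInf_of_continuous_s9
    (fun u => ((continuous_conditionalCost c γ i q).comp (.prodMk_left u)).measurable)
    fun y => (continuous_conditionalCost c γ i q).comp (.prodMk_right y)

lemma integrable_bestResponseCost [Nonempty (U i)] (ν : ProbabilityMeasure (Y i)) :
    Integrable (bestResponseCost c γ i q) ν :=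
  .of_bound (measurable_bestResponseCost c γ i q).aestronglyMeasurable ‖c‖
    (.of_forall (norm_bestResponseCost_le c γ i q))

lemma integrable_conditionalCost {g : Y i → U i} (hg : Measurable g)
    (ν : ProbabilityMeasure (Y i)) : Integrable (fun y => conditionalCost c γ i q y (g y)) ν :=
  .of_bound ((continuous_conditionalCost c γ i q).measurable.comp
    (measurable_id.prodMk hg)).aestronglyMeasurable ‖c‖
    (.of_forall fun y => norm_conditionalCost_le c γ i q y (g y))

lemma teamCost_deviate_update {g : Y i → U i} (hg : Measurable g) (ν : ProbabilityMeasure (Y i)) :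
    teamCost c (γ.deviate i g hg) (q.1, update q.2 i ν) =
      ∫ y, conditionalCost c γ i q y (g y) ∂ν := by
  have law_eq := measurePreserving_jointLaw_update q i ν
  rw [teamCost, ← law_eq.map_eq, integral_map law_eq.aemeasurable
    (integrable_boundedContinuous_comp c (by fun_prop)).aestronglyMeasurable]
  simp only [TeamPolicy.deviate_act_update]
  exact integral_prod_symm _ (integrable_boundedContinuous_comp c (by fun_prop))

lemma integral_bestResponseCost_le_teamCost [Nonempty (U i)] (ν : ProbabilityMeasure (Y i)) :
    ∫ y, bestResponseCost c γ i q y ∂ν ≤ teamCost c γ (q.1, update q.2 i ν) := by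
  rw [← γ.deviate_rule_self i, teamCost_deviate_update, γ.deviate_rule_self i]
  exact integral_mono (integrable_bestResponseCost c γ i q ν)
    (integrable_conditionalCost c γ i q (γ.measurable_rule i) ν) fun y =>
      ciInf_le (bddBelow_range_of_norm_le (norm_conditionalCost_le c γ i q y)) _

lemma exists_teamCost_le_integral_bestResponseCost_add [Nonempty (U i)]
    (ν : ProbabilityMeasure (Y i)) {ε : ℝ} (hε : 0 < ε) :
    ∃ γ' : TeamPolicy Y U,
      teamCost c γ' (q.1, update q.2 i ν) ≤ ∫ y, bestResponseCost c γ i q y ∂ν + ε := by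
  obtain ⟨g, hg, g_near⟩ := exists_measurable_lt_iInf_add
    (fun u => ((continuous_conditionalCost c γ i q).comp (.prodMk_left u)).measurable)
    (fun y => (continuous_conditionalCost c γ i q).comp (.prodMk_right y)) hε
  refine ⟨γ.deviate i g hg, ?_⟩
  calc teamCost c (γ.deviate i g hg) (q.1, update q.2 i ν)
      = ∫ y, conditionalCost c γ i q y (g y) ∂ν := teamCost_deviate_update c γ i q hg ν
    _ ≤ ∫ y, (bestResponseCost c γ i q y + ε) ∂ν :=
      integral_mono (integrable_conditionalCost c γ i q hg ν)
        ((integrable_bestResponseCost c γ i q ν).add (integrable_const ε)) fun y => (g_near y).le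
    _ = ∫ y, bestResponseCost c γ i q y ∂ν + ε := by
      simp [integral_add (integrable_bestResponseCost c γ i q ν) (integrable_const ε)]

lemma teamValue_update [∀ i, Nonempty (U i)] (ν : ProbabilityMeasure (Y i)) :
    teamValue c (q.1, update q.2 i ν) = ⨅ γ, ∫ y, bestResponseCost c γ i q y ∂ν := by
  refine le_antisymm (le_of_forall_pos_le_add fun ε hε => ?_) ?_
  · refine sub_le_iff_le_add.1 (le_ciInf fun γ => sub_le_iff_le_add.2 ?_)
    obtain ⟨γ', hγ'⟩ := exists_teamCost_le_integral_bestResponseCost_add c γ i q ν hε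
    exact (ciInf_le (bddBelow_range_of_norm_le (norm_teamCost_le c · _)) γ').trans hγ'
  · exact ciInf_mono (bddBelow_range_of_norm_le fun γ =>
      norm_integral_le_of_forall_norm_le (norm_bestResponseCost_le c γ i q))
      fun γ => integral_bestResponseCost_le_teamCost c γ i q ν

variable [SecondCountableTopology Ω] [PseudoMetrizableSpace Ω] [∀ i, PseudoMetrizableSpace (Y i)]
  [∀ i, CompactSpace (U i)] (q₀ : ProbabilityMeasure Ω × (∀ i, ProbabilityMeasure (Y i)))

lemma eventuallyEquicontinuous_bestResponseCost [Nonempty (U i)] :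
    EventuallyEquicontinuous (𝓝 q₀) fun q (γ : TeamPolicy Y U) => bestResponseCost c γ i q := by
  let C : (Ω × (∀ j, Y j)) × Y i × (∀ j, U j) →ᵇ ℝ := c.compContinuous
    ⟨fun p => (p.1.1, update p.1.2 i p.2.1, p.2.2), by fun_prop⟩
  exact EventuallyEquicontinuous.ciInf (f := fun q k y => conditionalCost c k.1 i q y k.2)
    (eventuallyEquicontinuous_integral C (continuous_jointLaw.tendsto q₀)
      (g := fun (k : TeamPolicy Y U × U i) p => update (k.1.act p.2) i k.2) fun k => by fun_prop)
    fun q γ y => bddBelow_range_of_norm_le (norm_conditionalCost_le c γ i q y)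

lemma tendsto_teamValue_sub_update [∀ i, Nonempty (U i)] :
    Tendsto (fun q => teamValue c q - teamValue c (q.1, update q.2 i (q₀.2 i))) (𝓝 q₀) (𝓝 0) := by
  refine ((eventuallyEquicontinuous_bestResponseCost c i q₀).tendsto_iInf_integral_sub
    (fun q γ => measurable_bestResponseCost c γ i q)
    (M := ‖c‖₊) (fun q γ => norm_bestResponseCost_le c γ i q) (ν := fun q => q.2 i)
    (Continuous.tendsto (by fun_prop) q₀)).congr fun q => ?_
  rw [← teamValue_update, ← teamValue_update, update_eq_self]

end Measurement

end Team

theorem static_team_value_continuous_in_prior_general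
    {ι Ω : Type*} [Fintype ι] {Y U : ι → Type*}
    [TopologicalSpace Ω] [SecondCountableTopology Ω] [PseudoMetrizableSpace Ω]
    [MeasurableSpace Ω] [OpensMeasurableSpace Ω]
    [∀ i, TopologicalSpace (Y i)] [∀ i, SecondCountableTopology (Y i)]
    [∀ i, PseudoMetrizableSpace (Y i)] [∀ i, MeasurableSpace (Y i)]
    [∀ i, OpensMeasurableSpace (Y i)]
    [∀ i, TopologicalSpace (U i)] [∀ i, CompactSpace (U i)]
    [∀ i, SecondCountableTopology (U i)] [∀ i, Nonempty (U i)]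
    [∀ i, MeasurableSpace (U i)] [∀ i, OpensMeasurableSpace (U i)]
    (c : Ω × (∀ i, Y i) × (∀ i, U i) →ᵇ ℝ) :
    Continuous (teamValue c) := by
  classical
  exact continuous_iff_continuousAt.2 fun q₀ => continuousAt_of_tendsto_sub_update
    (tendsto_teamValue_sub_fst c q₀) fun i => tendsto_teamValue_sub_update c i q₀

/-- Theorem 4.6 of the paper.  For a static team with
independent measurements, compact metrizable action spaces and a continuous
bounded nonnegative cost, the optimal team cost
`V (μ₀, Q) = inf_γ ∫ c (ω₀, y, (γ i (y i))ᵢ) d(μ₀ ⊗ ⨂ᵢ Q i)` is a continuous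
function of the prior `(μ₀, Q¹, …, Qᴺ)`, where the spaces of probability
measures carry the topology of weak convergence. -/
theorem static_team_value_continuous_in_prior
    {N : ℕ} {Ω₀ : Type*} {Y U : Fin N → Type*}
    [TopologicalSpace Ω₀] [PolishSpace Ω₀] [MeasurableSpace Ω₀] [BorelSpace Ω₀]
    [∀ i, TopologicalSpace (Y i)] [∀ i, PolishSpace (Y i)]
    [∀ i, MeasurableSpace (Y i)] [∀ i, BorelSpace (Y i)]
    [∀ i, TopologicalSpace (U i)] [∀ i, CompactSpace (U i)]
    [∀ i, TopologicalSpace.MetrizableSpace (U i)] [∀ i, Nonempty (U i)]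
    [∀ i, MeasurableSpace (U i)] [∀ i, BorelSpace (U i)]
    (c : Ω₀ × (∀ i, Y i) × (∀ i, U i) → ℝ)
    (hc_cont : Continuous c)
    (hc_nonneg : ∀ p, 0 ≤ c p)
    (hc_bdd : ∃ C : ℝ, ∀ p, c p ≤ C) :
    Continuous
      (fun q : ProbabilityMeasure Ω₀ × (∀ i, ProbabilityMeasure (Y i)) =>
        sInf {r : ℝ | ∃ γ : ∀ i, Y i → U i, (∀ i, Measurable (γ i)) ∧
          r = ∫ p, c (p.1, p.2, fun i => γ i (p.2 i))
                ∂((q.1 : Measure Ω₀).prod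
                    (Measure.pi fun i => (q.2 i : Measure (Y i))))}) := by
  obtain ⟨C, hC⟩ := hc_bdd
  let cost : Ω₀ × (∀ i, Y i) × (∀ i, U i) →ᵇ ℝ := .ofNormedAddCommGroup c hc_cont C fun p =>
    (Real.norm_of_nonneg (hc_nonneg p)).trans_le (hC p)
  have (i : Fin N) : SecondCountableTopology (U i) := by
    let := metrizableSpaceMetric (U i)
    infer_instance
  exact (static_team_value_continuous_in_prior_general cost).congr (teamValue_eq_sInf cost)
end

section
/- Consider a static team with a classical (expanding) information structure: the measurement spaces Y¹,…,Yᴺ and action spaces U¹,…,Uᴺ are compact metrizable, the measurements (y¹,…,yᴺ) have a fixed joint probability distribution ν on ∏ₖYᵏ (not affected by any actions), and decision maker n applies uⁿ = γⁿ(y¹,…,yⁿ) for a Borel measurable γⁿ : Y¹×⋯×Yⁿ → Uⁿ. Suppose the cost c̃ : ∏ₖYᵏ × ∏ₖUᵏ → [0,∞) is bounded and Borel measurable and, for every fixed y = (y¹,…,yᴺ), the map u = (u¹,…,uᴺ) ↦ c̃(y,u) is jointly lower semi-continuous. Then there exists a deterministic optimal team policy, i.e., Borel maps γ¹,…,γᴺ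 attaining the infimum over all such policies of ∫ c̃(y, (γⁿ(y¹,…,yⁿ))ₙ) ν(dy). -/
open MeasureTheory

/-!
The optimal policy is a limit of a minimizing sequence of policies `γ₀, γ₁, …`, extracted one
decision maker at a time. At stage `n` the indices of the extracted subsequence are themselves
random: they are chosen as functions of the information of decision maker `n`, so that the actions
of that decision maker converge at every sample point (a measurable Bolzano–Weierstrass selection)
while the conditional expected cost given this information comes close to its `liminf`. By Fatou's
lemma this selection does not increase the limiting expected cost, and since the information is
expanding, the reindexed policies of all later decision makers remain admissible; those of earlier
ones need not be, but their actions have already converged to admissible limits. After the last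
stage all actions converge, and lower semicontinuity with Fatou's lemma gives optimality of the
limit.
-/

namespace StaticTeam

open Filter Set TopologicalSpace
open scoped ENNReal Topology

section RandomSubsequence

variable {Ω : Type*}

/-- A random subsequence of `0, 1, 2, …`: at each `ω` the indices `τ 0 ω, τ 1 ω, …` tend to
infinity, with the bound `k ≤ τ k ω` in place of strict monotonicity, and each index is chosen
measurably with respect to the information `m`. -/
structure IsRandomSubseq (m : MeasurableSpace Ω) (τ : ℕ → Ω → ℕ) : Prop where
  measurable : ∀ k, Measurable[m] (τ k)
  le : ∀ k ω, k ≤ τ k ω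

theorem isRandomSubseq_const (m : MeasurableSpace Ω) : IsRandomSubseq m fun k _ ↦ k :=
  ⟨fun _ ↦ measurable_const, fun _ _ ↦ le_rfl⟩

theorem measurable_random_index {κ β : Type*} [Countable κ] [MeasurableSpace κ]
    [MeasurableSingletonClass κ] {_ : MeasurableSpace Ω} [MeasurableSpace β] {f : κ → Ω → β}
    {τ : Ω → κ} (hf : ∀ n, Measurable (f n)) (hτ : Measurable τ) :
    Measurable fun ω ↦ f (τ ω) ω :=
  (measurable_from_prod_countable_right (f := Function.uncurry f) hf).comp
    (hτ.prodMk measurable_id)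

namespace IsRandomSubseq

variable {m : MeasurableSpace Ω} {σ τ : ℕ → Ω → ℕ}

theorem mono {m' : MeasurableSpace Ω} (hτ : IsRandomSubseq m τ) (hm : m ≤ m') :
    IsRandomSubseq m' τ :=
  ⟨fun k ↦ (hτ.measurable k).mono hm le_rfl, hτ.le⟩

theorem comp (hτ : IsRandomSubseq m τ) (hσ : IsRandomSubseq m σ) :
    IsRandomSubseq m fun k ω ↦ τ (σ k ω) ω :=
  ⟨fun k ↦ measurable_random_index hτ.measurable (hσ.measurable k),
    fun k ω ↦ (hσ.le k ω).trans (hτ.le _ ω)⟩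

theorem tendsto_atTop (hτ : IsRandomSubseq m τ) (ω : Ω) :
    Tendsto (fun k ↦ τ k ω) atTop atTop :=
  tendsto_atTop_mono (fun k ↦ hτ.le k ω) tendsto_id

end IsRandomSubseq

variable [m : MeasurableSpace Ω]

theorem measurableSet_frequently_atTop {p : ℕ → Ω → Prop}
    (hp : ∀ n, MeasurableSet {ω | p n ω}) : MeasurableSet {ω | ∃ᶠ n in atTop, p n ω} := by
  simp only [← measurable_mem, mem_ofPred_eq, frequently_atTop] at hp ⊢
  fun_prop

theorem exists_measurable_gt_of_frequently {p : ℕ → Ω → Prop}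
    (hp : ∀ n, MeasurableSet {ω | p n ω}) (hfreq : ∀ ω, ∃ᶠ n in atTop, p n ω)
    {t : Ω → ℕ} (ht : Measurable t) :
    ∃ τ : Ω → ℕ, Measurable τ ∧ ∀ ω, t ω < τ ω ∧ p (τ ω) ω := by
  classical
  have hex : ∀ ω, ∃ n, t ω < n ∧ p n ω := fun ω ↦ frequently_atTop'.1 (hfreq ω) (t ω)
  exact ⟨fun ω ↦ Nat.find (hex ω),
    measurable_find hex fun n ↦ (measurableSet_lt ht measurable_const).inter (hp n),
    fun ω ↦ Nat.find_spec (hex ω)⟩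

theorem frequently_le_liminf_add (a : ℕ → ℝ≥0∞) {ε : ℝ≥0∞} (hε : ε ≠ 0) :
    ∃ᶠ n in atTop, a n ≤ liminf a atTop + ε := by
  rcases eq_or_ne (liminf a atTop) ∞ with hL | hL
  · simp [hL, atTop_neBot]
  · exact (frequently_lt_of_liminf_lt (h := ENNReal.lt_add_right hL hε)).mono fun n ↦ le_of_lt

theorem exists_isRandomSubseq_le_liminf_add {J : ℕ → Ω → ℝ≥0∞} (hJ : ∀ n, Measurable (J n)) :
    ∃ τ, IsRandomSubseq m τ ∧
      ∀ k ω, J (τ k ω) ω ≤ liminf (fun n ↦ J n ω) atTop + (k : ℝ≥0∞)⁻¹ := by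
  have hsel : ∀ k : ℕ, ∃ t : Ω → ℕ, Measurable t ∧
      ∀ ω, k < t ω ∧ J (t ω) ω ≤ liminf (fun n ↦ J n ω) atTop + (k : ℝ≥0∞)⁻¹ := fun k ↦
    exists_measurable_gt_of_frequently
      (fun n ↦ measurableSet_le (hJ n) ((Measurable.liminf hJ).add_const _))
      (fun ω ↦ frequently_le_liminf_add _ (by simp)) measurable_const
  choose τ hτ hspec using hsel
  exact ⟨τ, ⟨hτ, fun k ω ↦ (hspec k ω).1.le⟩, fun k ω ↦ (hspec k ω).2⟩

theorem frequently_and_frequently_dist_lt {X : Type*} [PseudoMetricSpace X] [CompactSpace X]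
    (x : ℕ → X) {p : ℕ → Prop} (hp : ∃ᶠ n in atTop, p n) {δ : ℝ} (hδ : 0 < δ) :
    ∃ᶠ n in atTop, p n ∧ ∃ᶠ k in atTop, dist (x k) (x n) < δ := by
  have : NeBot (atTop ⊓ 𝓟 {n | p n}) := frequently_mem_iff_neBot.1 hp
  obtain ⟨a, ha⟩ := exists_clusterPt_of_compactSpace (map x (atTop ⊓ 𝓟 {n | p n}))
  have hnear : ∃ᶠ n in atTop, p n ∧ dist (x n) a < δ / 2 := by
    have := mapClusterPt_iff_frequently.1 ha _ (Metric.ball_mem_nhds a (half_pos hδ))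
    simpa [frequently_inf_principal] using this
  refine hnear.mono fun n hn ↦ ⟨hn.1, hnear.mono fun k hk ↦ ?_⟩
  linarith [dist_triangle_right (x k) (x n) a, hn.2, hk.2]

-- The invariant is that `x` returns infinitely often to the `2⁻ᵏ`-ball around `x (τ k ω) ω`, so
-- that the next index can be found inside that ball.
theorem exists_isRandomSubseq_dist_le_geometric {X : Type*} [PseudoMetricSpace X] [CompactSpace X]
    [MeasurableSpace X] [OpensMeasurableSpace X] {x : ℕ → Ω → X} (hx : ∀ n, Measurable (x n)) :
    ∃ τ, IsRandomSubseq m τ ∧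
      ∀ k ω, dist (x (τ k ω) ω) (x (τ (k + 1) ω) ω) ≤ (1 / 2) ^ k := by
  let Recurrent (k : ℕ) (t : Ω → ℕ) : Prop :=
    Measurable t ∧ ∀ ω, ∃ᶠ n in atTop, dist (x n ω) (x (t ω) ω) < (1 / 2) ^ k
  have hrec_meas (k n : ℕ) :
      MeasurableSet {ω | ∃ᶠ l in atTop, dist (x l ω) (x n ω) < (1 / 2) ^ k} :=
    measurableSet_frequently_atTop fun l ↦ measurableSet_lt ((hx l).dist (hx n)) measurable_const
  obtain ⟨t₀, ht₀⟩ : ∃ t, Recurrent 0 t := by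
    obtain ⟨t, ht, hspec⟩ := exists_measurable_gt_of_frequently (t := fun _ ↦ 0) (hrec_meas 0)
      (fun ω ↦ (frequently_and_frequently_dist_lt (fun n ↦ x n ω) (p := fun _ ↦ True)
        (by simp [atTop_neBot]) (by simp)).mono fun n hn ↦ hn.2) measurable_const
    exact ⟨t, ht, fun ω ↦ (hspec ω).2⟩
  have hstep (k : ℕ) (t : {t // Recurrent k t}) : ∃ t' : {t // Recurrent (k + 1) t},
      ∀ ω, t.1 ω < t'.1 ω ∧ dist (x (t'.1 ω) ω) (x (t.1 ω) ω) < (1 / 2) ^ k := by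
    obtain ⟨t, ht, hfreq⟩ := t
    obtain ⟨t', ht', hspec⟩ := exists_measurable_gt_of_frequently
      (fun n ↦ (measurableSet_lt ((hx n).dist (measurable_random_index hx ht))
        measurable_const).inter (hrec_meas (k + 1) n))
      (fun ω ↦ frequently_and_frequently_dist_lt (fun n ↦ x n ω) (hfreq ω) (by positivity)) ht
    exact ⟨⟨t', ht', fun ω ↦ (hspec ω).2.2⟩, fun ω ↦ ⟨(hspec ω).1, (hspec ω).2.1⟩⟩
  choose next hlt hdist using hstep
  let τ : ∀ k, {t // Recurrent k t} := fun k ↦ Nat.rec ⟨t₀, ht₀⟩ next k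
  refine ⟨fun k ↦ (τ k).1, ⟨fun k ↦ (τ k).2.1, fun k ω ↦ ?_⟩, fun k ω ↦ ?_⟩
  · exact (strictMono_nat_of_lt_succ fun k ↦ hlt k (τ k) ω).le_apply
  · rw [dist_comm]
    exact (hdist k (τ k) ω).le

theorem exists_isRandomSubseq_tendsto {X : Type*} [TopologicalSpace X] [PseudoMetrizableSpace X]
    [CompactSpace X] [MeasurableSpace X] [BorelSpace X] {x : ℕ → Ω → X}
    (hx : ∀ n, Measurable (x n)) :
    ∃ τ, IsRandomSubseq m τ ∧
      ∃ g : Ω → X, Measurable g ∧ ∀ ω, Tendsto (fun k ↦ x (τ k ω) ω) atTop (𝓝 (g ω)) := by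
  let := pseudoMetrizableSpacePseudoMetric X
  obtain ⟨τ, hτ, hdist⟩ := exists_isRandomSubseq_dist_le_geometric hx
  have hcauchy (ω : Ω) : CauchySeq fun k ↦ x (τ k ω) ω :=
    cauchySeq_of_le_geometric (1 / 2) 1 (by norm_num) fun k ↦ by simpa using hdist k ω
  choose g hg using fun ω ↦ cauchySeq_tendsto_of_complete (hcauchy ω)
  exact ⟨τ, hτ, g, measurable_of_tendsto_metrizable
    (fun k ↦ measurable_random_index hx (hτ.measurable k)) (tendsto_pi_nhds.2 hg), hg⟩

theorem exists_isRandomSubseq_tendsto_and_le_liminf_add {X : Type*} [TopologicalSpace X]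
    [PseudoMetrizableSpace X] [CompactSpace X] [MeasurableSpace X] [BorelSpace X]
    {x : ℕ → Ω → X} (hx : ∀ n, Measurable (x n)) {J : ℕ → Ω → ℝ≥0∞}
    (hJ : ∀ n, Measurable (J n)) :
    ∃ τ, IsRandomSubseq m τ ∧
      (∃ g : Ω → X, Measurable g ∧ ∀ ω, Tendsto (fun k ↦ x (τ k ω) ω) atTop (𝓝 (g ω))) ∧
      ∀ k ω, J (τ k ω) ω ≤ liminf (fun n ↦ J n ω) atTop + (k : ℝ≥0∞)⁻¹ := by
  obtain ⟨τ, hτ, hJτ⟩ := exists_isRandomSubseq_le_liminf_add hJ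
  obtain ⟨σ, hσ, hlim⟩ := exists_isRandomSubseq_tendsto
    fun n ↦ measurable_random_index hx (hτ.measurable n)
  refine ⟨_, hτ.comp hσ, hlim, fun k ω ↦ (hJτ (σ k ω) ω).trans ?_⟩
  gcongr
  exact hσ.le k ω

end RandomSubsequence

section ConditionalCost

variable {Ω : Type*} {m m0 : MeasurableSpace Ω} {μ : Measure Ω}

theorem lintegral_eq_tsum_setLIntegral_fiber {κ : Type*} [Countable κ] [MeasurableSpace κ]
    [MeasurableSingletonClass κ] {τ : Ω → κ} (hτ : Measurable τ) (f : Ω → ℝ≥0∞) :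
    ∫⁻ ω, f ω ∂μ = ∑' n, ∫⁻ ω in τ ⁻¹' {n}, f ω ∂μ := by
  rw [← lintegral_iUnion (fun n ↦ hτ (measurableSet_singleton n))
    (pairwise_disjoint_fiber τ), ← preimage_iUnion, iUnion_of_singleton, preimage_univ,
    setLIntegral_univ]

theorem lintegral_condLExp_random_index {κ : Type*} [Countable κ] [MeasurableSpace κ]
    [MeasurableSingletonClass κ] (hm : m ≤ m0) [SigmaFinite (μ.trim hm)] (f : κ → Ω → ℝ≥0∞)
    {τ : Ω → κ} (hτ : Measurable[m] τ) :
    ∫⁻ ω, μ⁻[f (τ ω) | m] ω ∂μ = ∫⁻ ω, f (τ ω) ω ∂μ := by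
  have hfiber (h : κ → Ω → ℝ≥0∞) (n : κ) :
      ∫⁻ ω in τ ⁻¹' {n}, h (τ ω) ω ∂μ = ∫⁻ ω in τ ⁻¹' {n}, h n ω ∂μ :=
    setLIntegral_congr_fun (hm _ (hτ (measurableSet_singleton n))) fun ω hω ↦ by
      rw [mem_preimage, mem_singleton_iff] at hω
      simp only [hω]
  have hτ0 : Measurable τ := hτ.mono hm le_rfl
  rw [lintegral_eq_tsum_setLIntegral_fiber hτ0, lintegral_eq_tsum_setLIntegral_fiber hτ0]
  refine tsum_congr fun n ↦ ?_
  rw [hfiber f, hfiber fun n ↦ μ⁻[f n | m]]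
  exact setLIntegral_condLExp hm μ (f n) (hτ (measurableSet_singleton n))

-- Both the subsequence and the limit use only the information `m`, whereas `f` may depend on
-- everything: the selection is steered by the conditional costs `μ⁻[f n | m]`.
theorem exists_isRandomSubseq_tendsto_and_limsup_lintegral_le (hm : m ≤ m0) [IsFiniteMeasure μ]
    {X : Type*} [TopologicalSpace X] [PseudoMetrizableSpace X] [CompactSpace X]
    [MeasurableSpace X] [BorelSpace X] {x : ℕ → Ω → X} (hx : ∀ n, Measurable[m] (x n))
    (f : ℕ → Ω → ℝ≥0∞) :
    ∃ τ, IsRandomSubseq m τ ∧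
      (∃ g : Ω → X, Measurable[m] g ∧ ∀ ω, Tendsto (fun k ↦ x (τ k ω) ω) atTop (𝓝 (g ω))) ∧
      limsup (fun k ↦ ∫⁻ ω, f (τ k ω) ω ∂μ) atTop ≤ liminf (fun k ↦ ∫⁻ ω, f k ω ∂μ) atTop := by
  obtain ⟨τ, hτ, hlim, hJτ⟩ := exists_isRandomSubseq_tendsto_and_le_liminf_add (m := m) hx
    fun n ↦ measurable_condLExp m μ (f n)
  refine ⟨τ, hτ, hlim, ?_⟩
  let L : Ω → ℝ≥0∞ := fun ω ↦ liminf (fun n ↦ μ⁻[f n | m] ω) atTop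
  have hle (k : ℕ) : ∫⁻ ω, f (τ k ω) ω ∂μ ≤ ∫⁻ ω, L ω ∂μ + (k : ℝ≥0∞)⁻¹ * μ univ :=
    calc ∫⁻ ω, f (τ k ω) ω ∂μ = ∫⁻ ω, μ⁻[f (τ k ω) | m] ω ∂μ :=
          (lintegral_condLExp_random_index hm f (hτ.measurable k)).symm
      _ ≤ ∫⁻ ω, (L ω + (k : ℝ≥0∞)⁻¹) ∂μ := lintegral_mono fun ω ↦ hJτ k ω
      _ = ∫⁻ ω, L ω ∂μ + (k : ℝ≥0∞)⁻¹ * μ univ := by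
          rw [lintegral_add_right _ measurable_const, lintegral_const]
  have htends : Tendsto (fun k : ℕ ↦ ∫⁻ ω, L ω ∂μ + (k : ℝ≥0∞)⁻¹ * μ univ) atTop
      (𝓝 (∫⁻ ω, L ω ∂μ)) := by
    simpa using tendsto_const_nhds.add (ENNReal.Tendsto.mul_const
      ENNReal.tendsto_inv_nat_nhds_zero (Or.inr (measure_ne_top μ univ)))
  calc limsup (fun k ↦ ∫⁻ ω, f (τ k ω) ω ∂μ) atTop ≤ ∫⁻ ω, L ω ∂μ :=
        (limsup_le_limsup (Eventually.of_forall hle)).trans htends.limsup_eq.le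
    _ ≤ liminf (fun k ↦ ∫⁻ ω, μ⁻[f k | m] ω ∂μ) atTop :=
        lintegral_liminf_le fun n ↦ measurable_condLExp' m μ (f n)
    _ = liminf (fun k ↦ ∫⁻ ω, f k ω ∂μ) atTop := by simp only [lintegral_condLExp hm]

end ConditionalCost

section AdaptedMinimizer

variable {Ω ι : Type*} {m0 : MeasurableSpace Ω} {μ : Measure Ω} [IsFiniteMeasure μ]
  [LinearOrder ι] {F : Filtration ι m0} {U : ι → Type*} [∀ i, TopologicalSpace (U i)]
  [∀ i, CompactSpace (U i)] [∀ i, PseudoMetrizableSpace (U i)] [∀ i, MeasurableSpace (U i)]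
  [∀ i, BorelSpace (U i)]

theorem exists_isRandomSubseq_tendsto_of_adapted {γ : ℕ → ∀ i, Ω → U i}
    (hγ : ∀ n, Adapted F (γ n)) (c : Ω → (∀ i, U i) → ℝ≥0∞) (s : Finset ι) :
    ∃ τ : ℕ → Ω → ℕ, (∀ j ∈ upperBounds (s : Set ι), IsRandomSubseq (F j) τ) ∧
      (∀ i ∈ s, ∃ g : Ω → U i, Measurable[F i] g ∧
        ∀ ω, Tendsto (fun k ↦ γ (τ k ω) i ω) atTop (𝓝 (g ω))) ∧
      liminf (fun k ↦ ∫⁻ ω, c ω (fun i ↦ γ (τ k ω) i ω) ∂μ) atTop ≤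
        liminf (fun k ↦ ∫⁻ ω, c ω (fun i ↦ γ k i ω) ∂μ) atTop := by
  induction s using Finset.induction_on_max with
  | empty => exact ⟨fun k _ ↦ k, fun j _ ↦ isRandomSubseq_const (F j), by simp, le_rfl⟩
  | insert a s hsa ih =>
    obtain ⟨τ, hτ, hlim, hcost⟩ := ih
    have hτa : IsRandomSubseq (F a) τ := hτ a fun i hi ↦ (hsa i hi).le
    obtain ⟨σ, hσ, hlim_a, hcost_a⟩ := exists_isRandomSubseq_tendsto_and_limsup_lintegral_le
      (μ := μ) (F.le a) (fun n ↦ measurable_random_index (fun k ↦ hγ k a) (hτa.measurable n))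
      (fun n ω ↦ c ω (fun i ↦ γ (τ n ω) i ω))
    refine ⟨fun k ω ↦ τ (σ k ω) ω, fun j hj ↦ ?_, fun i hi ↦ ?_,
      (le_trans liminf_le_limsup hcost_a).trans hcost⟩
    · have haj : a ≤ j := hj (by simp)
      exact (hτa.comp hσ).mono (F.mono haj)
    · rcases Finset.mem_insert.1 hi with rfl | his
      · exact hlim_a
      · obtain ⟨g, hg, hgt⟩ := hlim i his
        exact ⟨g, hg, fun ω ↦ (hgt ω).comp (hσ.tendsto_atTop ω)⟩

theorem exists_adapted_lintegral_le_liminf [Finite ι] {γ : ℕ → ∀ i, Ω → U i}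
    (hγ : ∀ n, Adapted F (γ n)) {c : Ω → (∀ i, U i) → ℝ≥0∞}
    (hc : Measurable (Function.uncurry c)) (hlsc : ∀ ω, LowerSemicontinuous (c ω)) :
    ∃ g : ∀ i, Ω → U i, Adapted F g ∧ ∫⁻ ω, c ω (fun i ↦ g i ω) ∂μ ≤
      liminf (fun k ↦ ∫⁻ ω, c ω (fun i ↦ γ k i ω) ∂μ) atTop := by
  have := Fintype.ofFinite ι
  obtain ⟨τ, hτ, hlim, hcost⟩ := exists_isRandomSubseq_tendsto_of_adapted (μ := μ) hγ c Finset.univ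
  choose g hg htends using fun i ↦ hlim i (Finset.mem_univ i)
  have hlim_pi (ω : Ω) : Tendsto (fun k i ↦ γ (τ k ω) i ω) atTop (𝓝 fun i ↦ g i ω) :=
    tendsto_pi_nhds.2 fun i ↦ htends i ω
  have hmeas (k : ℕ) : Measurable fun ω ↦ c ω (fun i ↦ γ (τ k ω) i ω) := by
    refine hc.comp (measurable_id.prodMk (measurable_pi_lambda _ fun i ↦ ?_))
    have : Nonempty ι := ⟨i⟩
    obtain ⟨j, hj⟩ := (Finset.univ : Finset ι).bddAbove
    exact measurable_random_index (fun n ↦ (hγ n i).mono (F.le i) le_rfl)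
      (((hτ j hj).mono (F.le j)).measurable k)
  refine ⟨g, hg, ?_⟩
  calc ∫⁻ ω, c ω (fun i ↦ g i ω) ∂μ
      ≤ ∫⁻ ω, liminf (fun k ↦ c ω (fun i ↦ γ (τ k ω) i ω)) atTop ∂μ :=
        lintegral_mono fun ω ↦ ((hlsc ω).lowerSemicontinuousAt _).le_liminf.trans
          (liminf_le_liminf_of_le (hlim_pi ω))
    _ ≤ liminf (fun k ↦ ∫⁻ ω, c ω (fun i ↦ γ (τ k ω) i ω) ∂μ) atTop := lintegral_liminf_le hmeas
    _ ≤ liminf (fun k ↦ ∫⁻ ω, c ω (fun i ↦ γ k i ω) ∂μ) atTop := hcost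

variable (μ F) in
theorem exists_adapted_forall_lintegral_le [Finite ι] [∀ i, Nonempty (U i)]
    {c : Ω → (∀ i, U i) → ℝ≥0∞}
    (hc : Measurable (Function.uncurry c)) (hlsc : ∀ ω, LowerSemicontinuous (c ω)) :
    ∃ g : ∀ i, Ω → U i, Adapted F g ∧ ∀ γ : ∀ i, Ω → U i, Adapted F γ →
      ∫⁻ ω, c ω (fun i ↦ g i ω) ∂μ ≤ ∫⁻ ω, c ω (fun i ↦ γ i ω) ∂μ := by
  let cost (γ : ∀ i, Ω → U i) : ℝ≥0∞ := ∫⁻ ω, c ω (fun i ↦ γ i ω) ∂μ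
  have hne : {γ : ∀ i, Ω → U i | Adapted F γ}.Nonempty :=
    ⟨fun i _ ↦ Classical.arbitrary (U i), fun _ ↦ measurable_const⟩
  obtain ⟨v, -, hv, hmem⟩ := exists_seq_tendsto_sInf (hne.image cost) (OrderBot.bddBelow _)
  choose γ hγ hcost using hmem
  obtain ⟨g, hg, hle⟩ := exists_adapted_lintegral_le_liminf (μ := μ) hγ hc hlsc
  have hlim : liminf (fun k ↦ cost (γ k)) atTop = sInf (cost '' {γ | Adapted F γ}) := by
    simpa only [hcost] using hv.liminf_eq
  exact ⟨g, hg, fun γ' hγ' ↦ (hle.trans_eq hlim).trans (sInf_le (mem_image_of_mem cost hγ'))⟩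

end AdaptedMinimizer

section Team

variable {ι : Type*} {Y U : ι → Type*} [∀ i, MeasurableSpace (Y i)]

theorem measurable_piLE_iff [Preorder ι] {Z : Type*} [MeasurableSpace Z]
    [MeasurableSingletonClass Z] {i : ι} {f : (∀ j, Y j) → Z} :
    Measurable[Filtration.piLE (X := Y) i] f ↔ Measurable f ∧ DependsOn f (Iic i) := by
  classical
  refine ⟨fun hf ↦ ⟨hf.mono (Filtration.piLE.le i) le_rfl, hf.dependsOn_of_piLE⟩,
    fun ⟨hf, hdep⟩ ↦ ?_⟩
  rcases isEmpty_or_nonempty (∀ j, Y j) with hY | ⟨⟨y₀⟩⟩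
  · exact @measurable_of_empty _ _ (Filtration.piLE i) _ _ f
  let extend (z : ∀ j : Iic i, Y j) (j : ι) : Y j := if hj : j ≤ i then z ⟨j, hj⟩ else y₀ j
  have hextend : Measurable extend := measurable_pi_lambda _ fun j ↦ by
    by_cases hj : j ≤ i
    · simpa only [extend, hj, dite_true] using measurable_pi_apply _
    · simpa only [extend, hj, dite_false] using measurable_const
  have hfactor : f = (f ∘ extend) ∘ Preorder.restrictLe i :=
    funext fun y ↦ hdep fun j hj ↦ by simp [extend, mem_Iic.1 hj]
  rw [hfactor]
  exact (hf.comp hextend).comp (comap_measurable _)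

/-- A team policy under the classical information structure: decision maker `i` acts by a
measurable function of the measurements `y j` with `j ≤ i`. It is encoded as a function of the whole
measurement tuple that depends only on these coordinates. -/
def IsClassicalPolicy [Preorder ι] [∀ i, MeasurableSpace (U i)] (γ : ∀ i, (∀ j, Y j) → U i) :
    Prop :=
  (∀ i, Measurable (γ i)) ∧ ∀ i y y', (∀ j, j ≤ i → y j = y' j) → γ i y = γ i y'

theorem isClassicalPolicy_iff_adapted [Preorder ι] [∀ i, MeasurableSpace (U i)]
    [∀ i, MeasurableSingletonClass (U i)] {γ : ∀ i, (∀ j, Y j) → U i} :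
    IsClassicalPolicy γ ↔ Adapted Filtration.piLE γ := by
  simp only [Adapted, measurable_piLE_iff, forall_and]
  rfl

theorem integral_comp_le_of_lintegral_ofReal_le {Ω Z : Type*} [MeasurableSpace Ω]
    [MeasurableSpace Z] {μ : Measure Ω} [IsFiniteMeasure μ] {c : Z → ℝ} (hc : Measurable c)
    (hc_nonneg : ∀ z, 0 ≤ c z) {C : ℝ} (hC : ∀ z, c z ≤ C) {f g : Ω → Z} (hf : Measurable f)
    (hg : Measurable g)
    (h : ∫⁻ ω, ENNReal.ofReal (c (f ω)) ∂μ ≤ ∫⁻ ω, ENNReal.ofReal (c (g ω)) ∂μ) :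
    ∫ ω, c (f ω) ∂μ ≤ ∫ ω, c (g ω) ∂μ := by
  have hint {e : Ω → Z} (he : Measurable e) : Integrable (fun ω ↦ c (e ω)) μ :=
    .of_bound (hc.comp he).aestronglyMeasurable C
      (ae_of_all _ fun ω ↦ by simpa [abs_of_nonneg (hc_nonneg _)] using hC (e ω))
  rw [integral_eq_lintegral_of_nonneg_ae (ae_of_all _ fun _ ↦ hc_nonneg _) (hint hf).1,
    integral_eq_lintegral_of_nonneg_ae (ae_of_all _ fun _ ↦ hc_nonneg _) (hint hg).1]
  exact ENNReal.toReal_mono (hint hg).lintegral_lt_top.ne h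

end Team

end StaticTeam

theorem static_team_classical_exists_optimal_general {ι : Type*} [LinearOrder ι] [Finite ι]
    {Y U : ι → Type*} [∀ i, MeasurableSpace (Y i)] [∀ i, TopologicalSpace (U i)]
    [∀ i, CompactSpace (U i)] [∀ i, TopologicalSpace.MetrizableSpace (U i)] [∀ i, Nonempty (U i)]
    [∀ i, MeasurableSpace (U i)] [∀ i, BorelSpace (U i)] (ν : Measure (∀ i, Y i))
    [IsFiniteMeasure ν] {c : (∀ i, Y i) × (∀ i, U i) → ENNReal} (hc : Measurable c)
    (hlsc : ∀ y, LowerSemicontinuous fun u ↦ c (y, u)) :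
    ∃ γ : ∀ i, (∀ j, Y j) → U i, StaticTeam.IsClassicalPolicy γ ∧
      ∀ γ' : ∀ i, (∀ j, Y j) → U i, StaticTeam.IsClassicalPolicy γ' →
        ∫⁻ y, c (y, fun i ↦ γ i y) ∂ν ≤ ∫⁻ y, c (y, fun i ↦ γ' i y) ∂ν := by
  simp only [StaticTeam.isClassicalPolicy_iff_adapted]
  exact StaticTeam.exists_adapted_forall_lintegral_le ν Filtration.piLE (c := fun y u ↦ c (y, u))
    hc hlsc

/-- Theorem 5.6 of the paper.  Static team with a classical
(expanding) information structure: the measurements `(y¹,…,yᴺ)` have a fixed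
joint law `ν` on the compact metrizable product `∏ₖ Yᵏ` (unaffected by any
actions), and decision maker `n` applies `uⁿ = γⁿ(y¹,…,yⁿ)` — encoded here as a
measurable map on the full tuple depending only on the coordinates `≤ n`.  If
the bounded Borel measurable cost `c̃ : ∏ₖYᵏ × ∏ₖUᵏ → [0,∞)` is, for every
fixed `y`, jointly lower semi-continuous in the action tuple `u`, then a
deterministic optimal team policy exists. -/
theorem static_team_classical_exists_optimal
    {N : ℕ} {Y U : Fin N → Type*}
    [∀ i, TopologicalSpace (Y i)] [∀ i, CompactSpace (Y i)]
    [∀ i, TopologicalSpace.MetrizableSpace (Y i)] [∀ i, Nonempty (Y i)]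
    [∀ i, MeasurableSpace (Y i)] [∀ i, BorelSpace (Y i)]
    [∀ i, TopologicalSpace (U i)] [∀ i, CompactSpace (U i)]
    [∀ i, TopologicalSpace.MetrizableSpace (U i)] [∀ i, Nonempty (U i)]
    [∀ i, MeasurableSpace (U i)] [∀ i, BorelSpace (U i)]
    (ν : Measure (∀ i, Y i)) [IsProbabilityMeasure ν]
    (c : (∀ i, Y i) × (∀ i, U i) → ℝ)
    (hc_meas : Measurable c)
    (hc_nonneg : ∀ p, 0 ≤ c p)
    (hc_bdd : ∃ C : ℝ, ∀ p, c p ≤ C)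
    (hc_lsc_u : ∀ y : ∀ i, Y i,
      LowerSemicontinuous fun u : ∀ i, U i => c (y, u)) :
    ∃ γ : ∀ i, (∀ j, Y j) → U i,
      ((∀ i, Measurable (γ i)) ∧
        (∀ (i : Fin N) (y y' : ∀ j, Y j),
          (∀ j : Fin N, j ≤ i → y j = y' j) → γ i y = γ i y')) ∧
      ∀ γ' : ∀ i, (∀ j, Y j) → U i,
        ((∀ i, Measurable (γ' i)) ∧
          (∀ (i : Fin N) (y y' : ∀ j, Y j),
            (∀ j : Fin N, j ≤ i → y j = y' j) → γ' i y = γ' i y')) →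
        (∫ y, c (y, fun i => γ i y) ∂ν) ≤ ∫ y, c (y, fun i => γ' i y) ∂ν := by
  obtain ⟨C, hC⟩ := hc_bdd
  obtain ⟨γ, hγ, hopt⟩ := static_team_classical_exists_optimal_general ν
    hc_meas.ennreal_ofReal fun y ↦ ENNReal.continuous_ofReal.comp_lowerSemicontinuous
      (hc_lsc_u y) fun _ _ ↦ ENNReal.ofReal_le_ofReal
  exact ⟨γ, hγ, fun γ' hγ' ↦ StaticTeam.integral_comp_le_of_lintegral_ofReal_le hc_meas hc_nonneg hC
    (measurable_id.prodMk (measurable_pi_lambda _ hγ.1))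
    (measurable_id.prodMk (measurable_pi_lambda _ hγ'.1)) (hopt γ' hγ')⟩
end

section
/- Let k > 0 and let Y and W be independent standard Gaussian random variables (mean zero, variance one). For Borel measurable γ¹, γ² : ℝ → ℝ define J(γ¹, γ²) = E[ k·(γ¹(Y) − Y)² + (γ²(γ¹(Y) + W) − γ¹(Y))² ] ∈ [0, ∞]. Then there exists a pair of Borel measurable functions (γ¹*, γ²*) attaining the infimum of J over all pairs of Borel measurable functions; i.e., Witsenhausen's counterexample admits an optimal policy. -/
open MeasureTheory ProbabilityTheory
open scoped ENNReal

/-- The expected cost in Witsenhausen's counterexample: `Y` and `W` are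
independent standard Gaussians, the first decision maker applies `u¹ = γ¹ Y`,
the second observes `γ¹ Y + W` and applies `u² = γ² (γ¹ Y + W)`, and the cost
is `k (u¹ - Y)² + (u² - u¹)²`; the value lies in `[0, ∞]`. -/
noncomputable def witsenhausenCost (k : ℝ) (γ₁ γ₂ : ℝ → ℝ) : ℝ≥0∞ :=
  ∫⁻ p : ℝ × ℝ,
    ENNReal.ofReal
      (k * (γ₁ p.1 - p.1) ^ 2 + (γ₂ (γ₁ p.1 + p.2) - γ₁ p.1) ^ 2)
    ∂((gaussianReal 0 1).prod (gaussianReal 0 1))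

/-!
Fix the first policy `γ₁`. The best second policy is the posterior mean of `γ₁ Y` given
`γ₁ Y + W`, and it leaves a cost that depends on the observation only through the first three
posterior moments. Since a Gaussian density dominates every power of its mean, these moments are
continuous under almost everywhere convergence of `γ₁`, and Fatou's lemma makes the reduced cost
lower semicontinuous.

Fix the second policy `γ₂`. The first decision maker minimises `k (u - y)² + h u` over `u`, where
`h` is lower semicontinuous; the minimisers exist and increase with `y`. So only monotone `γ₁`
matter. Monotone functions at bounded mean square distance from the identity are pointwise bounded,
so Helly's selection theorem extracts an almost everywhere convergent minimising sequence.
-/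

open Filter Topology
open scoped NNReal

/-! ### Lower semicontinuity -/

lemma exists_forall_le_of_lowerSemicontinuous {α β : Type*} [TopologicalSpace α] [LinearOrder β]
    {f : α → β} (hf : LowerSemicontinuous f) (x₀ : α)
    (hx₀ : ∀ᶠ x in cocompact α, f x₀ ≤ f x) : ∃ x, ∀ y, f x ≤ f y := by
  obtain ⟨K, hK, hKx₀⟩ := mem_cocompact.1 hx₀
  obtain ⟨x, -, hx⟩ := (hf.lowerSemicontinuousOn _).exists_isMinOn
    (Set.insert_nonempty x₀ K) (hK.insert x₀)
  refine ⟨x, fun y => ?_⟩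
  by_cases hy : y ∈ K
  · exact hx (Set.mem_insert_of_mem x₀ hy)
  · exact (hx (Set.mem_insert x₀ K)).trans (hKx₀ hy)

lemma liminf_add_liminf_le_liminf_add {ι : Type*} {l : Filter ι} (u v : ι → ℝ≥0∞) :
    liminf u l + liminf v l ≤ liminf (fun i => u i + v i) l := by
  rw [liminf_eq (u := u), liminf_eq (u := v), sSup_eq_iSup, sSup_eq_iSup]
  refine ENNReal.biSup_add_biSup_le' ⟨0, by simp⟩ ⟨0, by simp⟩ fun a ha b hb => ?_
  exact le_liminf_of_le (h := (ha.and hb).mono fun i hi => add_le_add hi.1 hi.2)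

lemma lintegral_le_liminf_of_ae_tendsto {Ω ι : Type*} [MeasurableSpace Ω] {μ : Measure Ω}
    {l : Filter ι} [l.NeBot] [l.IsCountablyGenerated] {f : ι → Ω → ℝ≥0∞} {g : Ω → ℝ≥0∞}
    (hf : ∀ i, Measurable (f i)) (hfg : ∀ᵐ ω ∂μ, Tendsto (fun i => f i ω) l (𝓝 (g ω))) :
    ∫⁻ ω, g ω ∂μ ≤ liminf (fun i => ∫⁻ ω, f i ω ∂μ) l :=
  calc ∫⁻ ω, g ω ∂μ = ∫⁻ ω, liminf (fun i => f i ω) l ∂μ :=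
        lintegral_congr_ae (hfg.mono fun _ hω => hω.liminf_eq.symm)
    _ ≤ liminf (fun i => ∫⁻ ω, f i ω ∂μ) l := lintegral_liminf_le hf

/-! ### Helly's selection theorem -/

section Helly

variable {α β : Type*} [LinearOrder α] [TopologicalSpace α] [OrderTopology α] [DenselyOrdered α]
  [NoMinOrder α] [NoMaxOrder α]

lemma tendsto_of_forall_mem_dense_tendsto_of_continuousAt [LinearOrder β] [TopologicalSpace β]
    [OrderTopology β] {ι : Type*} {l : Filter ι} {f : ι → α → β} {g : α → β} {D : Set α} {x : α}
    (hf : ∀ i, Monotone (f i)) (hg : Monotone g) (hD : Dense D)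
    (hfg : ∀ d ∈ D, Tendsto (fun i => f i d) l (𝓝 (g d))) (hx : ContinuousAt g x) :
    Tendsto (fun i => f i x) l (𝓝 (g x)) := by
  refine tendsto_order.2 ⟨fun a ha => ?_, fun b hb => ?_⟩
  · obtain ⟨y, hyx, hay⟩ := (hx.eventually (lt_mem_nhds ha)).exists_lt
    obtain ⟨d, hd, hyd, hdx⟩ := hD.exists_between hyx
    filter_upwards [(hfg d hd).eventually (lt_mem_nhds (hay.trans_le (hg hyd.le)))] with i hi
    exact hi.trans_le (hf i hdx.le)
  · obtain ⟨y, hxy, hyb⟩ := (hx.eventually (gt_mem_nhds hb)).exists_gt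
    obtain ⟨d, hd, hxd, hdy⟩ := hD.exists_between hxy
    filter_upwards [(hfg d hd).eventually (gt_mem_nhds ((hg hdy.le).trans_lt hyb))] with i hi
    exact (hf i hxd.le).trans_lt hi

variable [ConditionallyCompleteLinearOrder β] [TopologicalSpace β] [OrderTopology β]
  [SecondCountableTopology β]

lemma exists_subseq_forall_tendsto_of_mem_Icc {ι : Type*} [Countable ι] {x : ℕ → ι → β}
    {a b : ι → β} (hx : ∀ n i, x n i ∈ Set.Icc (a i) (b i)) :
    ∃ φ : ℕ → ℕ, StrictMono φ ∧
      ∃ y : ι → β, ∀ i, Tendsto (fun n => x (φ n) i) atTop (𝓝 (y i)) := by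
  have hK : IsCompact (Set.univ.pi fun i => Set.Icc (a i) (b i)) :=
    isCompact_univ_pi fun _ => isCompact_Icc
  obtain ⟨y, -, φ, hφ, hy⟩ := hK.tendsto_subseq fun n i _ => hx n i
  exact ⟨φ, hφ, y, tendsto_pi_nhds.1 hy⟩

lemma exists_subseq_tendsto_of_monotone [TopologicalSpace.SeparableSpace α] {f : ℕ → α → β}
    {a b : α → β} (hf : ∀ n, Monotone (f n)) (hab : ∀ n x, f n x ∈ Set.Icc (a x) (b x)) :
    ∃ φ : ℕ → ℕ, StrictMono φ ∧ ∃ g : α → β, Monotone g ∧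
      {x | ¬ Tendsto (fun n => f (φ n) x) atTop (𝓝 (g x))}.Countable := by
  obtain ⟨D, hDc, hD⟩ := TopologicalSpace.exists_countable_dense α
  have : Countable D := hDc.to_subtype
  obtain ⟨φ, hφ, y, hy⟩ := exists_subseq_forall_tendsto_of_mem_Icc
    (x := fun n (d : D) => f n d) fun n d => hab n d
  let g : α → β := fun x => liminf (fun n => f (φ n) x) atTop
  have hge : ∀ x, IsBoundedUnder (· ≥ ·) atTop fun n => f (φ n) x := fun x =>
    isBoundedUnder_of ⟨a x, fun n => (hab (φ n) x).1⟩
  have hle : ∀ x, IsBoundedUnder (· ≤ ·) atTop fun n => f (φ n) x := fun x =>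
    isBoundedUnder_of ⟨b x, fun n => (hab (φ n) x).2⟩
  have hg : Monotone g := fun x x' hxx' =>
    liminf_le_liminf (Eventually.of_forall fun n => hf (φ n) hxx') (hge x)
      (hle x').isCoboundedUnder_ge
  have hgD : ∀ d ∈ D, Tendsto (fun n => f (φ n) d) atTop (𝓝 (g d)) := fun d hd => by
    have hd' := hy ⟨d, hd⟩
    rwa [← hd'.liminf_eq] at hd'
  exact ⟨φ, hφ, g, hg, hg.countable_not_continuousAt.mono fun x =>
    mt (tendsto_of_forall_mem_dense_tendsto_of_continuousAt (fun n => hf (φ n)) hg hD hgD)⟩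

end Helly

/-! ### Monotone functions close to the identity -/

section MeanSquare

variable {k : ℝ} {μ : Measure ℝ} [IsLocallyFiniteMeasure μ] [μ.IsOpenPosMeasure] {C : ℝ≥0∞}

lemma exists_forall_exists_mem_Ioo_abs_sub_le (hk : 0 < k) (hC : C ≠ ⊤) {a b : ℝ} (hab : a < b) :
    ∃ M : ℝ, ∀ g : ℝ → ℝ, Measurable g → ∫⁻ y, ENNReal.ofReal (k * (g y - y) ^ 2) ∂μ ≤ C →
      ∃ y ∈ Set.Ioo a b, |g y - y| ≤ M := by
  have hpos : μ (Set.Ioo a b) ≠ 0 :=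
    (isOpen_Ioo.measure_pos μ (Set.nonempty_Ioo.2 hab)).ne'
  have hfin : C / μ (Set.Ioo a b) ≠ ⊤ := ENNReal.div_ne_top hC hpos
  refine ⟨√((C / μ (Set.Ioo a b)).toReal / k), fun g hg hgC => ?_⟩
  obtain ⟨y, hy, hle⟩ := exists_le_setLAverage hpos measure_Ioo_lt_top.ne
    (f := fun y => ENNReal.ofReal (k * (g y - y) ^ 2)) (by fun_prop)
  have hyC : ENNReal.ofReal (k * (g y - y) ^ 2) ≤ C / μ (Set.Ioo a b) := by
    rw [setLAverage_eq] at hle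
    exact hle.trans (ENNReal.div_le_div_right ((setLIntegral_le_lintegral _ _).trans hgC) _)
  refine ⟨y, hy, Real.abs_le_sqrt ?_⟩
  rw [le_div_iff₀' hk]
  exact (ENNReal.ofReal_le_iff_le_toReal hfin).1 hyC

lemma exists_forall_monotone_mem_Icc (hk : 0 < k) (hC : C ≠ ⊤) (x : ℝ) :
    ∃ a b : ℝ, ∀ g : ℝ → ℝ, Monotone g →
      ∫⁻ y, ENNReal.ofReal (k * (g y - y) ^ 2) ∂μ ≤ C → g x ∈ Set.Icc a b := by
  obtain ⟨M, hM⟩ := exists_forall_exists_mem_Ioo_abs_sub_le (μ := μ) hk hC (sub_one_lt x)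
  obtain ⟨N, hN⟩ := exists_forall_exists_mem_Ioo_abs_sub_le (μ := μ) hk hC (lt_add_one x)
  refine ⟨x - 1 - M, x + 1 + N, fun g hg hgC => ?_⟩
  obtain ⟨y, ⟨hxy, hyx⟩, hyM⟩ := hM g hg.measurable hgC
  obtain ⟨z, ⟨hxz, hzx⟩, hzN⟩ := hN g hg.measurable hgC
  constructor
  · linarith [hg hyx.le, (abs_le.1 hyM).1]
  · linarith [hg hxz.le, (abs_le.1 hzN).2]

lemma exists_subseq_ae_tendsto_of_monotone [NullSingletonClass μ] (hk : 0 < k) (hC : C ≠ ⊤)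
    {f : ℕ → ℝ → ℝ} (hf : ∀ n, Monotone (f n))
    (hfC : ∀ n, ∫⁻ y, ENNReal.ofReal (k * (f n y - y) ^ 2) ∂μ ≤ C) :
    ∃ φ : ℕ → ℕ, StrictMono φ ∧ ∃ g : ℝ → ℝ, Monotone g ∧
      ∀ᵐ y ∂μ, Tendsto (fun n => f (φ n) y) atTop (𝓝 (g y)) := by
  choose a b hab using exists_forall_monotone_mem_Icc (μ := μ) hk hC
  obtain ⟨φ, hφ, g, hg, hcount⟩ :=
    exists_subseq_tendsto_of_monotone hf fun n x => hab x (f n) (hf n) (hfC n)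
  exact ⟨φ, hφ, g, hg, hcount.measure_zero μ⟩

end MeanSquare

/-! ### Monotone selection of minimisers -/

section Proximal

variable {k : ℝ} {h : ℝ → ℝ≥0∞}

lemma exists_forall_ofReal_mul_sq_add_le (hk : 0 < k) (hh : LowerSemicontinuous h) {u₀ : ℝ}
    (hu₀ : h u₀ ≠ ⊤) (y : ℝ) :
    ∃ u, ∀ w, ENNReal.ofReal (k * (u - y) ^ 2) + h u ≤ ENNReal.ofReal (k * (w - y) ^ 2) + h w := by
  have hcont : Continuous fun u => ENNReal.ofReal (k * (u - y) ^ 2) :=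
    ENNReal.continuous_ofReal.comp (by fun_prop)
  have hcoercive : Tendsto (fun u => ENNReal.ofReal (k * (u - y) ^ 2)) (cocompact ℝ) (𝓝 ⊤) := by
    refine ENNReal.tendsto_ofReal_nhds_top.2 (Tendsto.const_mul_atTop hk ?_)
    simpa only [Function.comp_def, Real.dist_eq, sq_abs] using
      (tendsto_pow_atTop two_ne_zero).comp (tendsto_dist_right_cocompact_atTop y)
  refine exists_forall_le_of_lowerSemicontinuous (hcont.lowerSemicontinuous.add hh) u₀ ?_
  have hfin : ENNReal.ofReal (k * (u₀ - y) ^ 2) + h u₀ < ⊤ := by simp [hu₀.lt_top]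
  filter_upwards [hcoercive.eventually (lt_mem_nhds hfin)] with w hw
  exact hw.le.trans le_self_add

lemma monotone_of_forall_ofReal_mul_sq_add_le (hk : 0 < k) {g : ℝ → ℝ} (hfin : ∀ y, h (g y) ≠ ⊤)
    (hg : ∀ y w, ENNReal.ofReal (k * (g y - y) ^ 2) + h (g y) ≤
      ENNReal.ofReal (k * (w - y) ^ 2) + h w) : Monotone g := by
  have hreal : ∀ y y', k * (g y - y) ^ 2 + (h (g y)).toReal ≤
      k * (g y' - y) ^ 2 + (h (g y')).toReal := fun y y' => by
    have hyy' := hg y (g y')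
    rwa [← ENNReal.ofReal_toReal (hfin y), ← ENNReal.ofReal_toReal (hfin y'),
      ← ENNReal.ofReal_add (by positivity) ENNReal.toReal_nonneg,
      ← ENNReal.ofReal_add (by positivity) ENNReal.toReal_nonneg,
      ENNReal.ofReal_le_ofReal_iff (by positivity)] at hyy'
  intro y y' hyy'
  obtain rfl | hlt := hyy'.eq_or_lt
  · rfl
  -- Adding the two optimality conditions leaves only the cross terms.
  have hcross : 0 ≤ k * (y' - y) * (g y' - g y) := by linarith [hreal y y', hreal y' y]
  exact sub_nonneg.1 (nonneg_of_mul_nonneg_right hcross (mul_pos hk (sub_pos.2 hlt)))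

lemma exists_monotone_forall_ofReal_mul_sq_add_le (hk : 0 < k) (hh : LowerSemicontinuous h)
    {u₀ : ℝ} (hu₀ : h u₀ ≠ ⊤) :
    ∃ g : ℝ → ℝ, Monotone g ∧ ∀ y w, ENNReal.ofReal (k * (g y - y) ^ 2) + h (g y) ≤
      ENNReal.ofReal (k * (w - y) ^ 2) + h w := by
  choose g hg using exists_forall_ofReal_mul_sq_add_le hk hh hu₀
  refine ⟨g, monotone_of_forall_ofReal_mul_sq_add_le hk (fun y => ?_) hg, hg⟩
  exact ne_top_of_le_ne_top (by simp [hu₀]) (le_add_self.trans (hg y u₀))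

end Proximal

/-! ### Estimation in Gaussian noise -/

section Estimation

variable {v : ℝ≥0}

lemma continuous_gaussianPDFReal_left (v : ℝ≥0) (z : ℝ) :
    Continuous fun u => gaussianPDFReal u v z := by
  unfold gaussianPDFReal
  fun_prop

lemma abs_gaussianPDFReal_mul_pow_le (hv : v ≠ 0) (u z : ℝ) (n : ℕ) :
    |gaussianPDFReal u v z * u ^ n| ≤
      (√(2 * Real.pi * v))⁻¹ * (Real.exp (|z| + v / 2) * n.factorial) := by
  have hpow : |u| ^ n ≤ Real.exp |u| * n.factorial :=
    (div_le_iff₀ (by positivity)).1 (Real.pow_div_factorial_le_exp |u| (abs_nonneg u) n)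
  have hexponent : -(z - u) ^ 2 / (2 * v) + |u| ≤ |z| + v / 2 := by
    have htriangle : |u| ≤ |z| + |z - u| := by simpa using abs_sub z (z - u)
    have hsquare : |z - u| - (z - u) ^ 2 / (2 * v) = v / 2 - (|z - u| - v) ^ 2 / (2 * v) := by
      rw [← sq_abs (z - u)]
      field_simp
      ring
    have hnonneg : 0 ≤ (|z - u| - v) ^ 2 / (2 * v) := by positivity
    rw [neg_div]
    linarith
  rw [abs_mul, abs_of_pos (gaussianPDFReal_pos u v z hv), abs_pow, gaussianPDFReal, mul_assoc]
  refine mul_le_mul_of_nonneg_left ?_ (by positivity)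
  calc Real.exp (-(z - u) ^ 2 / (2 * v)) * |u| ^ n
      ≤ Real.exp (-(z - u) ^ 2 / (2 * v)) * (Real.exp |u| * n.factorial) := by gcongr
    _ = Real.exp (-(z - u) ^ 2 / (2 * v) + |u|) * n.factorial := by rw [Real.exp_add, mul_assoc]
    _ ≤ Real.exp (|z| + v / 2) * n.factorial := by gcongr

/-- The mean square error of the estimator `g` when the signal has the value `u` and is observed
through additive Gaussian noise of variance `v`. -/
noncomputable def estimationError (v : ℝ≥0) (g : ℝ → ℝ) (u : ℝ) : ℝ≥0∞ :=
  ∫⁻ z, ENNReal.ofReal ((g z - u) ^ 2) ∂(gaussianReal u v)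

lemma estimationError_eq_lintegral_gaussianPDFReal (hv : v ≠ 0) (g : ℝ → ℝ) (u : ℝ) :
    estimationError v g u = ∫⁻ z, ENNReal.ofReal (gaussianPDFReal u v z * (g z - u) ^ 2) := by
  rw [estimationError, gaussianReal_of_var_ne_zero u hv,
    lintegral_withDensity_eq_lintegral_mul_non_measurable _ (measurable_gaussianPDF u v)
      (ae_of_all _ fun _ => gaussianPDF_lt_top)]
  simp only [Pi.mul_apply, gaussianPDF, ENNReal.ofReal_mul (gaussianPDFReal_nonneg u v _)]

lemma lintegral_ofReal_sq_sub_add_gaussianReal {g : ℝ → ℝ} (hg : Measurable g) (v : ℝ≥0) (u : ℝ) :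
    ∫⁻ w, ENNReal.ofReal ((g (u + w) - u) ^ 2) ∂(gaussianReal 0 v) = estimationError v g u := by
  rw [← lintegral_map (f := fun z => ENNReal.ofReal ((g z - u) ^ 2)) (by fun_prop) (by fun_prop),
    gaussianReal_map_const_add, zero_add, estimationError]

lemma lowerSemicontinuous_estimationError (hv : v ≠ 0) {g : ℝ → ℝ} (hg : Measurable g) :
    LowerSemicontinuous (estimationError v g) := by
  refine lowerSemicontinuous_iff_le_liminf.2 fun u => ?_
  simp only [funext (estimationError_eq_lintegral_gaussianPDFReal hv g)]
  refine lintegral_le_liminf_of_ae_tendsto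
    (f := fun u z => ENNReal.ofReal (gaussianPDFReal u v z * (g z - u) ^ 2))
    (fun u => by fun_prop) (ae_of_all _ fun z => ?_)
  have hcont := continuous_gaussianPDFReal_left v z
  exact ENNReal.tendsto_ofReal (Continuous.tendsto (by fun_prop) u)

variable {Ω : Type*} [MeasurableSpace Ω] {μ : Measure Ω} {X : Ω → ℝ}

/-- The unnormalised `n`-th posterior moment of the signal `X` given that its observation through
independent Gaussian noise of variance `v` equals `z`. For `n = 0` this is the density of the
observation, and dividing by it gives the posterior moment. -/
noncomputable def posteriorMoment (μ : Measure Ω) (v : ℝ≥0) (X : Ω → ℝ) (n : ℕ) (z : ℝ) : ℝ :=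
  ∫ ω, gaussianPDFReal (X ω) v z * X ω ^ n ∂μ

/-- The posterior mean of the signal `X` given the observation `z`: the minimum mean square error
estimator of `X`. -/
noncomputable def posteriorMean (μ : Measure Ω) (v : ℝ≥0) (X : Ω → ℝ) (z : ℝ) : ℝ :=
  posteriorMoment μ v X 1 z / posteriorMoment μ v X 0 z

/-- The posterior variance of the signal `X` given the observation `z`, multiplied by the density
of the observation at `z`. Its integral is the minimum mean square error. -/
noncomputable def posteriorVarianceDensity (μ : Measure Ω) (v : ℝ≥0) (X : Ω → ℝ) (z : ℝ) : ℝ :=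
  posteriorMoment μ v X 2 z - posteriorMoment μ v X 1 z ^ 2 / posteriorMoment μ v X 0 z

lemma measurable_posteriorMoment [SFinite μ] (hX : Measurable X) (v : ℝ≥0) (n : ℕ) :
    Measurable (posteriorMoment μ v X n) := by
  have hintegrand : Measurable fun p : ℝ × Ω => gaussianPDFReal (X p.2) v p.1 * X p.2 ^ n := by
    fun_prop
  exact hintegrand.stronglyMeasurable.integral_prod_right'.measurable

lemma measurable_posteriorMean [SFinite μ] (hX : Measurable X) (v : ℝ≥0) :
    Measurable (posteriorMean μ v X) :=
  (measurable_posteriorMoment hX v 1).div (measurable_posteriorMoment hX v 0)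

lemma measurable_posteriorVarianceDensity [SFinite μ] (hX : Measurable X) (v : ℝ≥0) :
    Measurable (posteriorVarianceDensity μ v X) :=
  (measurable_posteriorMoment hX v 2).sub
    (((measurable_posteriorMoment hX v 1).pow_const 2).div (measurable_posteriorMoment hX v 0))

variable [IsFiniteMeasure μ]

lemma integrable_gaussianPDFReal_mul_pow (hv : v ≠ 0) (hX : Measurable X) (n : ℕ) (z : ℝ) :
    Integrable (fun ω => gaussianPDFReal (X ω) v z * X ω ^ n) μ :=
  .of_bound (Measurable.aestronglyMeasurable (by fun_prop)) _
    (ae_of_all _ fun ω => abs_gaussianPDFReal_mul_pow_le hv (X ω) z n)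

lemma tendsto_posteriorMoment {ι : Type*} {l : Filter ι} [l.IsCountablyGenerated] (hv : v ≠ 0)
    {f : ι → Ω → ℝ} (hf : ∀ i, Measurable (f i))
    (hfX : ∀ᵐ ω ∂μ, Tendsto (fun i => f i ω) l (𝓝 (X ω))) (n : ℕ) (z : ℝ) :
    Tendsto (fun i => posteriorMoment μ v (f i) n z) l (𝓝 (posteriorMoment μ v X n z)) := by
  refine tendsto_integral_filter_of_dominated_convergence _
    (Eventually.of_forall fun i => (integrable_gaussianPDFReal_mul_pow hv (hf i) n z).1)
    (Eventually.of_forall fun i => ae_of_all _ fun ω =>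
      abs_gaussianPDFReal_mul_pow_le hv (f i ω) z n)
    (integrable_const _) (hfX.mono fun ω hω => ?_)
  exact (((continuous_gaussianPDFReal_left v z).mul (continuous_pow n)).tendsto (X ω)).comp hω

lemma integrable_gaussianPDFReal_mul_sq_sub (hv : v ≠ 0) (hX : Measurable X) (z a : ℝ) :
    Integrable (fun ω => gaussianPDFReal (X ω) v z * (a - X ω) ^ 2) μ := by
  have hshift := integrable_gaussianPDFReal_mul_pow (μ := μ) hv (hX.sub_const a) 2 (z - a)
  simpa only [gaussianPDFReal_sub, sub_add_cancel, sub_sq_comm a] using hshift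

variable [NeZero μ]

lemma posteriorMoment_zero_pos (hv : v ≠ 0) (hX : Measurable X) (z : ℝ) :
    0 < posteriorMoment μ v X 0 z := by
  have hpos : ∀ ω, 0 < gaussianPDFReal (X ω) v z * X ω ^ 0 := fun ω => by
    simpa using gaussianPDFReal_pos (X ω) v z hv
  rw [posteriorMoment, integral_pos_iff_support_of_nonneg (fun ω => (hpos ω).le)
    (integrable_gaussianPDFReal_mul_pow hv hX 0 z),
    Function.support_eq_univ fun ω => (hpos ω).ne']
  exact Measure.measure_univ_pos.2 (NeZero.ne μ)

lemma tendsto_posteriorVarianceDensity {ι : Type*} {l : Filter ι} [l.IsCountablyGenerated]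
    (hv : v ≠ 0) {f : ι → Ω → ℝ} (hf : ∀ i, Measurable (f i)) (hX : Measurable X)
    (hfX : ∀ᵐ ω ∂μ, Tendsto (fun i => f i ω) l (𝓝 (X ω))) (z : ℝ) :
    Tendsto (fun i => posteriorVarianceDensity μ v (f i) z) l
      (𝓝 (posteriorVarianceDensity μ v X z)) :=
  (tendsto_posteriorMoment hv hf hfX 2 z).sub
    (((tendsto_posteriorMoment hv hf hfX 1 z).pow 2).div (tendsto_posteriorMoment hv hf hfX 0 z)
      (posteriorMoment_zero_pos hv hX z).ne')

lemma integral_gaussianPDFReal_mul_sq_sub (hv : v ≠ 0) (hX : Measurable X) (z a : ℝ) :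
    ∫ ω, gaussianPDFReal (X ω) v z * (a - X ω) ^ 2 ∂μ =
      posteriorVarianceDensity μ v X z +
        posteriorMoment μ v X 0 z * (a - posteriorMean μ v X z) ^ 2 := by
  have hint := fun n => integrable_gaussianPDFReal_mul_pow (μ := μ) hv hX n z
  have hsub : Integrable (fun ω => a ^ 2 * (gaussianPDFReal (X ω) v z * X ω ^ 0) -
      2 * a * (gaussianPDFReal (X ω) v z * X ω ^ 1)) μ :=
    ((hint 0).const_mul _).sub ((hint 1).const_mul _)
  have hexpand : ∀ ω, gaussianPDFReal (X ω) v z * (a - X ω) ^ 2 =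
      a ^ 2 * (gaussianPDFReal (X ω) v z * X ω ^ 0) -
        2 * a * (gaussianPDFReal (X ω) v z * X ω ^ 1) + gaussianPDFReal (X ω) v z * X ω ^ 2 :=
    fun ω => by ring
  have hpos := posteriorMoment_zero_pos (μ := μ) hv hX z
  calc ∫ ω, gaussianPDFReal (X ω) v z * (a - X ω) ^ 2 ∂μ
      = a ^ 2 * posteriorMoment μ v X 0 z - 2 * a * posteriorMoment μ v X 1 z +
          posteriorMoment μ v X 2 z := by
        simp only [hexpand]
        rw [integral_add hsub (hint 2), integral_sub ((hint 0).const_mul _) ((hint 1).const_mul _),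
          integral_const_mul, integral_const_mul]
        rfl
    _ = _ := by
        unfold posteriorVarianceDensity posteriorMean
        field_simp
        ring

lemma lintegral_estimationError_eq (hv : v ≠ 0) (hX : Measurable X) {g : ℝ → ℝ}
    (hg : Measurable g) :
    ∫⁻ ω, estimationError v g (X ω) ∂μ =
      ∫⁻ z, ENNReal.ofReal (posteriorVarianceDensity μ v X z +
        posteriorMoment μ v X 0 z * (g z - posteriorMean μ v X z) ^ 2) := by
  have hnonneg : ∀ z ω, 0 ≤ gaussianPDFReal (X ω) v z * (g z - X ω) ^ 2 := fun z ω =>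
    mul_nonneg (gaussianPDFReal_nonneg _ _ _) (sq_nonneg _)
  simp only [estimationError_eq_lintegral_gaussianPDFReal hv]
  rw [lintegral_lintegral_swap (by fun_prop)]
  refine lintegral_congr fun z => ?_
  rw [← integral_gaussianPDFReal_mul_sq_sub hv hX,
    ofReal_integral_eq_lintegral_ofReal
      (integrable_gaussianPDFReal_mul_sq_sub hv hX z (g z)) (ae_of_all _ (hnonneg z))]

lemma lintegral_posteriorVarianceDensity_le (hv : v ≠ 0) (hX : Measurable X) {g : ℝ → ℝ}
    (hg : Measurable g) :
    ∫⁻ z, ENNReal.ofReal (posteriorVarianceDensity μ v X z) ≤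
      ∫⁻ ω, estimationError v g (X ω) ∂μ := by
  rw [lintegral_estimationError_eq hv hX hg]
  gcongr with z
  exact le_add_of_nonneg_right
    (mul_nonneg (posteriorMoment_zero_pos hv hX z).le (sq_nonneg _))

lemma lintegral_estimationError_posteriorMean (hv : v ≠ 0) (hX : Measurable X) :
    ∫⁻ ω, estimationError v (posteriorMean μ v X) (X ω) ∂μ =
      ∫⁻ z, ENNReal.ofReal (posteriorVarianceDensity μ v X z) := by
  simp [lintegral_estimationError_eq hv hX (measurable_posteriorMean hX v)]

end Estimation

/-! ### Witsenhausen's cost -/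

section Witsenhausen

variable {k : ℝ} {γ₁ γ₂ : ℝ → ℝ}

lemma witsenhausenCost_eq (hk : 0 ≤ k) (h₁ : Measurable γ₁) (h₂ : Measurable γ₂) :
    witsenhausenCost k γ₁ γ₂ =
      ∫⁻ y, (ENNReal.ofReal (k * (γ₁ y - y) ^ 2) + estimationError 1 γ₂ (γ₁ y))
        ∂(gaussianReal 0 1) := by
  rw [witsenhausenCost, lintegral_prod _ (by fun_prop)]
  refine lintegral_congr fun y => ?_
  simp_rw [ENNReal.ofReal_add (mul_nonneg hk (sq_nonneg (γ₁ y - y))) (sq_nonneg _)]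
  rw [lintegral_add_left measurable_const, lintegral_const, measure_univ, mul_one,
    lintegral_ofReal_sq_sub_add_gaussianReal h₂]

lemma witsenhausenCost_eq_add (hk : 0 ≤ k) (h₁ : Measurable γ₁) (h₂ : Measurable γ₂) :
    witsenhausenCost k γ₁ γ₂ =
      ∫⁻ y, ENNReal.ofReal (k * (γ₁ y - y) ^ 2) ∂(gaussianReal 0 1) +
        ∫⁻ y, estimationError 1 γ₂ (γ₁ y) ∂(gaussianReal 0 1) := by
  rw [witsenhausenCost_eq hk h₁ h₂, lintegral_add_left (by fun_prop)]

lemma exists_monotone_witsenhausenCost_le (hk : 0 < k) (h₁ : Measurable γ₁)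
    (h₂ : Measurable γ₂) :
    ∃ g : ℝ → ℝ, Monotone g ∧ witsenhausenCost k g γ₂ ≤ witsenhausenCost k γ₁ γ₂ := by
  by_cases hfin : ∃ u, estimationError 1 γ₂ u ≠ ⊤
  · obtain ⟨u, hu⟩ := hfin
    obtain ⟨g, hg, hmin⟩ := exists_monotone_forall_ofReal_mul_sq_add_le hk
      (lowerSemicontinuous_estimationError one_ne_zero h₂) hu
    refine ⟨g, hg, ?_⟩
    rw [witsenhausenCost_eq hk.le hg.measurable h₂, witsenhausenCost_eq hk.le h₁ h₂]
    exact lintegral_mono fun y => hmin y (γ₁ y)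
  · push Not at hfin
    refine ⟨id, monotone_id, ?_⟩
    simp [witsenhausenCost_eq_add hk.le h₁ h₂, hfin]

/-- The cost of the first policy `γ` when the second decision maker responds with the posterior
mean of the first control. -/
noncomputable def reducedCost (k : ℝ) (γ : ℝ → ℝ) : ℝ≥0∞ :=
  witsenhausenCost k γ (posteriorMean (gaussianReal 0 1) 1 γ)

lemma reducedCost_eq (hk : 0 ≤ k) (h₁ : Measurable γ₁) :
    reducedCost k γ₁ = ∫⁻ y, ENNReal.ofReal (k * (γ₁ y - y) ^ 2) ∂(gaussianReal 0 1) +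
      ∫⁻ z, ENNReal.ofReal (posteriorVarianceDensity (gaussianReal 0 1) 1 γ₁ z) := by
  rw [reducedCost, witsenhausenCost_eq_add hk h₁ (measurable_posteriorMean h₁ 1),
    lintegral_estimationError_posteriorMean one_ne_zero h₁]

lemma reducedCost_le_witsenhausenCost (hk : 0 ≤ k) (h₁ : Measurable γ₁) (h₂ : Measurable γ₂) :
    reducedCost k γ₁ ≤ witsenhausenCost k γ₁ γ₂ := by
  rw [reducedCost_eq hk h₁, witsenhausenCost_eq_add hk h₁ h₂]
  exact add_le_add le_rfl (lintegral_posteriorVarianceDensity_le one_ne_zero h₁ h₂)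

lemma reducedCost_le_liminf {ι : Type*} {l : Filter ι} [l.NeBot] [l.IsCountablyGenerated]
    (hk : 0 ≤ k) {f : ι → ℝ → ℝ} (hf : ∀ i, Measurable (f i)) (h₁ : Measurable γ₁)
    (hfγ₁ : ∀ᵐ y ∂(gaussianReal 0 1), Tendsto (fun i => f i y) l (𝓝 (γ₁ y))) :
    reducedCost k γ₁ ≤ liminf (fun i => reducedCost k (f i)) l := by
  simp only [reducedCost_eq hk h₁, reducedCost_eq hk (hf _)]
  refine le_trans (add_le_add ?_ ?_) (liminf_add_liminf_le_liminf_add _ _)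
  · refine lintegral_le_liminf_of_ae_tendsto (fun i => by fun_prop) (hfγ₁.mono fun y hy => ?_)
    exact ENNReal.tendsto_ofReal (((hy.sub_const y).pow 2).const_mul k)
  · exact lintegral_le_liminf_of_ae_tendsto
      (fun i => (measurable_posteriorVarianceDensity (hf i) 1).ennreal_ofReal)
      (ae_of_all _ fun z => ENNReal.tendsto_ofReal
        (tendsto_posteriorVarianceDensity one_ne_zero hf h₁ hfγ₁ z))

lemma exists_subseq_ae_tendsto_of_reducedCost_le (hk : 0 < k) {C : ℝ≥0∞} (hC : C ≠ ⊤)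
    {f : ℕ → ℝ → ℝ} (hf : ∀ n, Monotone (f n)) (hfC : ∀ n, reducedCost k (f n) ≤ C) :
    ∃ φ : ℕ → ℕ, StrictMono φ ∧ ∃ g : ℝ → ℝ, Monotone g ∧
      ∀ᵐ y ∂(gaussianReal 0 1), Tendsto (fun n => f (φ n) y) atTop (𝓝 (g y)) := by
  have : (gaussianReal 0 1).IsOpenPosMeasure :=
    (gaussianReal_absolutelyContinuous' 0 one_ne_zero).isOpenPosMeasure
  have : NullSingletonClass (gaussianReal 0 1) := nullSingletonClass_gaussianReal one_ne_zero
  refine exists_subseq_ae_tendsto_of_monotone hk hC hf fun n => le_trans ?_ (hfC n)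
  rw [reducedCost_eq hk.le (hf n).measurable]
  exact le_self_add

lemma exists_monotone_forall_reducedCost_le (hk : 0 < k) :
    ∃ γ : ℝ → ℝ, Monotone γ ∧ ∀ γ' : ℝ → ℝ, Monotone γ' → reducedCost k γ ≤ reducedCost k γ' := by
  let S : Set (ℝ → ℝ) := {γ | Monotone γ ∧ reducedCost k γ ≠ ⊤}
  obtain hS | hS := S.eq_empty_or_nonempty
  · refine ⟨id, monotone_id, fun γ' hγ' => ?_⟩
    have htop : reducedCost k γ' = ⊤ := by
      by_contra hne
      exact Set.notMem_empty γ' (hS ▸ ⟨hγ', hne⟩)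
    exact htop ▸ le_top
  obtain ⟨c, hc, hclim, hcS⟩ := exists_seq_tendsto_sInf (hS.image (reducedCost k))
    (OrderBot.bddBelow _)
  choose f hfS hfc using hcS
  obtain ⟨φ, hφ, γ, hγ, hlim⟩ := exists_subseq_ae_tendsto_of_reducedCost_le hk (hfS 0).2
    (fun n => (hfS n).1) fun n => by simpa only [hfc] using hc n.zero_le
  have hγinf : reducedCost k γ ≤ sInf (reducedCost k '' S) :=
    calc reducedCost k γ ≤ liminf (fun n => reducedCost k (f (φ n))) atTop :=
          reducedCost_le_liminf hk.le (fun n => (hfS (φ n)).1.measurable) hγ.measurable hlim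
      _ = sInf (reducedCost k '' S) := by
          simp only [hfc]
          exact (hclim.comp hφ.tendsto_atTop).liminf_eq
  refine ⟨γ, hγ, fun γ' hγ' => ?_⟩
  by_cases htop : reducedCost k γ' = ⊤
  · exact htop ▸ le_top
  · exact hγinf.trans (sInf_le ⟨γ', ⟨hγ', htop⟩, rfl⟩)

end Witsenhausen

/-- For every `k > 0`, Witsenhausen's counterexample admits
an optimal policy: there is a pair of Borel measurable functions `(γ₁*, γ₂*)`
attaining the infimum of the expected cost over all pairs of Borel measurable
functions. -/
theorem witsenhausen_exists_optimal (k : ℝ) (hk : 0 < k) :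
    ∃ γ₁ γ₂ : ℝ → ℝ, Measurable γ₁ ∧ Measurable γ₂ ∧
      ∀ γ₁' γ₂' : ℝ → ℝ, Measurable γ₁' → Measurable γ₂' →
        witsenhausenCost k γ₁ γ₂ ≤ witsenhausenCost k γ₁' γ₂' := by
  obtain ⟨γ, hγ, hmin⟩ := exists_monotone_forall_reducedCost_le hk
  refine ⟨γ, posteriorMean (gaussianReal 0 1) 1 γ, hγ.measurable,
    measurable_posteriorMean hγ.measurable 1, fun γ₁' γ₂' h₁ h₂ => ?_⟩
  obtain ⟨g, hg, hle⟩ := exists_monotone_witsenhausenCost_le hk h₁ h₂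
  calc witsenhausenCost k γ (posteriorMean (gaussianReal 0 1) 1 γ)
      ≤ reducedCost k g := hmin g hg
    _ ≤ witsenhausenCost k g γ₂' := reducedCost_le_witsenhausenCost hk.le hg.measurable h₂
    _ ≤ witsenhausenCost k γ₁' γ₂' := hle
end
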